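/- arXiv:2405.00729 — 2 statements merged into one kernel-verified Lean document; each statement's English description precedes it below -/
import Mathlib

section
/- Let A be a split quasi-hereditary algebra over a commutative Noetherian ring R with standard modules {Δ(λ) : λ ∈ Λ}. Then there exists a collection of A-modules {∇(λ) : λ ∈ Λ}, unique up to isomorphism, such that (A^op, {D∇(λ)}) is a split quasi-hereditary R-algebra and for all λ, β ∈ Λ and i ≥ 0: Ext^i_A(Δ(λ), ∇(β)) ≅ R if i = 0 and λ = β, and Ext^i_A(Δ(λ), ∇(β)) = 0 otherwise. -/
open scoped TensorProduct
open CategoryTheory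

noncomputable section

section Core

variable (R : Type) [CommRing R] (A : Type) [Ring A] [Algebra R A]

/-- The action of `a : A` on an `A`-module as an `R`-linear endomorphism. -/
def actL (M : Type) [AddCommGroup M] [Module R M] [Module A M] [IsScalarTower R A M]
    (a : A) : M →ₗ[R] M where
  toFun m := a • m
  map_add' := smul_add a
  map_smul' r m := (smul_comm r a m).symm

/-- The right `A`-module (i.e. `Aᵐᵒᵖ`-module) structure on the `R`-linear dual of a left
`A`-module `M`, given by `(aᵒᵖ • f) m = f (a • m)`. -/
instance dualModule (M : Type) [AddCommGroup M] [Module R M] [Module A M]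
    [IsScalarTower R A M] : Module Aᵐᵒᵖ (M →ₗ[R] R) where
  smul a f := f.comp (actL R A M a.unop)
  one_smul f := by ext m; show f ((1 : Aᵐᵒᵖ).unop • m) = f m; simp
  mul_smul a b f := by
    ext m
    show f ((a * b).unop • m) = f (b.unop • a.unop • m)
    simp [mul_smul]
  smul_zero a := rfl
  smul_add a f g := rfl
  add_smul a b f := by
    ext m
    show f ((a + b).unop • m) = f (a.unop • m) + f (b.unop • m)
    simp [add_smul]
  zero_smul f := by ext m; show f ((0 : Aᵐᵒᵖ).unop • m) = 0; simp

@[simp] lemma dualModule_smul_apply (M : Type) [AddCommGroup M] [Module R M] [Module A M]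
    [IsScalarTower R A M] (a : Aᵐᵒᵖ) (f : M →ₗ[R] R) (m : M) :
    (a • f) m = f (a.unop • m) := rfl

instance dualTower (M : Type) [AddCommGroup M] [Module R M] [Module A M]
    [IsScalarTower R A M] : IsScalarTower R Aᵐᵒᵖ (M →ₗ[R] R) := by
  constructor
  intro r a f
  ext m
  show f ((r • a).unop • m) = r • f (a.unop • m)
  rw [MulOpposite.unop_smul, smul_assoc, map_smul]

/-- The left `A`-module structure on the `R`-linear dual of a right `A`-module
(i.e. an `Aᵐᵒᵖ`-module) `M`, given by `(a • f) m = f (aᵒᵖ • m)`. -/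
instance dualModule' (M : Type) [AddCommGroup M] [Module R M] [Module Aᵐᵒᵖ M]
    [IsScalarTower R Aᵐᵒᵖ M] : Module A (M →ₗ[R] R) where
  smul a f := f.comp (actL R Aᵐᵒᵖ M (MulOpposite.op a))
  one_smul f := by ext m; show f (MulOpposite.op (1 : A) • m) = f m; simp
  mul_smul a b f := by
    ext m
    show f (MulOpposite.op (a * b) • m) = f (MulOpposite.op b • MulOpposite.op a • m)
    rw [MulOpposite.op_mul, mul_smul]
  smul_zero a := rfl
  smul_add a f g := rfl
  add_smul a b f := by
    ext m
    show f (MulOpposite.op (a + b) • m) = f (MulOpposite.op a • m) + f (MulOpposite.op b • m)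
    rw [MulOpposite.op_add, add_smul, map_add]
  zero_smul f := by ext m; show f (MulOpposite.op (0 : A) • m) = 0; simp

@[simp] lemma dualModule'_smul_apply (M : Type) [AddCommGroup M] [Module R M] [Module Aᵐᵒᵖ M]
    [IsScalarTower R Aᵐᵒᵖ M] (a : A) (f : M →ₗ[R] R) (m : M) :
    (a • f) m = f (MulOpposite.op a • m) := rfl

instance dualTower' (M : Type) [AddCommGroup M] [Module R M] [Module Aᵐᵒᵖ M]
    [IsScalarTower R Aᵐᵒᵖ M] : IsScalarTower R A (M →ₗ[R] R) := by
  constructor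
  intro r a f
  ext m
  show f (MulOpposite.op (r • a) • m) = r • f (MulOpposite.op a • m)
  rw [MulOpposite.op_smul, smul_assoc, map_smul]

variable (Λ : Type) [Fintype Λ] [PartialOrder Λ]

/-- Data witnessing that `X` is isomorphic to `Δ(λ) ⊗_R U` for some `λ ∈ S` and some finitely
generated projective `R`-module `U`. -/
structure TensorFactor (Δ : Λ → Type) [∀ l, AddCommGroup (Δ l)] [∀ l, Module R (Δ l)]
    [∀ l, Module A (Δ l)] [∀ l, IsScalarTower R A (Δ l)]
    (S : Set Λ) (X : Type) [AddCommGroup X] [Module A X] : Type 1 where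
  lam : Λ
  mem : lam ∈ S
  U : ModuleCat.{0} R
  fin : Module.Finite R U
  proj : Module.Projective R U
  iso : X ≃ₗ[A] (TensorProduct R (Δ lam) U)

/-- `M` belongs to `F(Δ̃_S)`: it is a finitely generated `A`-module with a finite filtration
whose factors are of the form `Δ(λ) ⊗_R U`, `λ ∈ S`, `U` a finitely generated projective
`R`-module. -/
def InFilt (Δ : Λ → Type) [∀ l, AddCommGroup (Δ l)] [∀ l, Module R (Δ l)]
    [∀ l, Module A (Δ l)] [∀ l, IsScalarTower R A (Δ l)]
    (S : Set Λ) (M : Type) [AddCommGroup M] [Module A M] : Prop :=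
  Module.Finite A M ∧
  ∃ (n : ℕ) (c : Fin (n + 1) → Submodule A M), c 0 = ⊥ ∧ c (Fin.last n) = ⊤ ∧ Monotone c ∧
    ∀ i : Fin n, Nonempty (TensorFactor R A Λ Δ S
      (↥(c i.succ) ⧸ (Submodule.comap (c i.succ).subtype (c i.castSucc))))

/-- Data witnessing that `X` is isomorphic to `F(λ)` for some `λ ∈ S`. -/
structure PlainFactor (F : Λ → Type) [∀ l, AddCommGroup (F l)] [∀ l, Module A (F l)]
    (S : Set Λ) (X : Type) [AddCommGroup X] [Module A X] : Type 1 where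
  lam : Λ
  mem : lam ∈ S
  iso : X ≃ₗ[A] F lam

/-- `M` has a finite filtration with factors among the modules `F(λ)`, `λ ∈ S`. -/
def InFiltPlain (F : Λ → Type) [∀ l, AddCommGroup (F l)] [∀ l, Module A (F l)]
    (S : Set Λ) (M : Type) [AddCommGroup M] [Module A M] : Prop :=
  Module.Finite A M ∧
  ∃ (n : ℕ) (c : Fin (n + 1) → Submodule A M), c 0 = ⊥ ∧ c (Fin.last n) = ⊤ ∧ Monotone c ∧
    ∀ i : Fin n, Nonempty (PlainFactor A Λ F S
      (↥(c i.succ) ⧸ (Submodule.comap (c i.succ).subtype (c i.castSucc))))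

/-- `X` is a direct summand of `Y` (as `A`-modules). -/
def IsDirectSummand (X Y : Type) [AddCommGroup X] [Module A X] [AddCommGroup Y]
    [Module A Y] : Prop :=
  ∃ (i : X →ₗ[A] Y) (p : Y →ₗ[A] X), p.comp i = LinearMap.id

/-- `X` belongs to the additive closure `add T`. -/
def InAdd (T : Type) [AddCommGroup T] [Module A T] (X : Type) [AddCommGroup X]
    [Module A X] : Prop :=
  ∃ n : ℕ, IsDirectSummand A X (Fin n → T)

/-- A split quasi-hereditary structure on the `R`-algebra `A` with standard modules
`Δ(λ)`, `λ ∈ Λ` (following Rouquier's module-theoretic definition). -/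
structure SplitQH (Δ : Λ → Type) [∀ l, AddCommGroup (Δ l)] [∀ l, Module R (Δ l)]
    [∀ l, Module A (Δ l)] [∀ l, IsScalarTower R A (Δ l)] : Type 1 where
  algFin : Module.Finite R A
  algProj : Module.Projective R A
  deltaFinA : ∀ l, Module.Finite A (Δ l)
  deltaFinR : ∀ l, Module.Finite R (Δ l)
  deltaProjR : ∀ l, Module.Projective R (Δ l)
  hom_le : ∀ l m : Λ, (∃ f : Δ l →ₗ[A] Δ m, f ≠ 0) → l ≤ m
  endIso : ∀ l, Nonempty ((Module.End A (Δ l)) ≃ₐ[R] R)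
  P : Λ → ModuleCat.{0} A
  P_proj : ∀ l, Module.Projective A (P l)
  P_fin : ∀ l, Module.Finite A (P l)
  epi : ∀ l, (P l : Type) →ₗ[A] Δ l
  epi_surj : ∀ l, Function.Surjective (epi l)
  ker_filt : ∀ l, InFilt R A Λ Δ {m | l < m} ↥(LinearMap.ker (epi l))
  add_gen : ∀ (Q : ModuleCat.{0} A), Module.Finite A Q → Module.Projective A Q →
    InAdd A (∀ l, (P l : Type)) Q

/-- Vanishing of `Ext^i_A(M, N)` (computed in the abelian category of `A`-modules). -/
def extVanish (M : Type) [AddCommGroup M] [Module A M] (N : Type) [AddCommGroup N]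
    [Module A N] (i : ℕ) : Prop :=
  Subsingleton (((Ext ℤ (ModuleCat.{0} A) i).obj
    (Opposite.op (ModuleCat.of A M))).obj (ModuleCat.of A N))

/-- `∇` is a family of costandard modules for the split quasi-hereditary algebra
`(A, {Δ(λ)})`: the `R`-linear duals `D∇(λ)` make `A^op` split quasi-hereditary (with the same
poset), and the `Ext`-orthogonality relations with the standard modules hold. -/
def IsCostandard (Δ : Λ → Type) [∀ l, AddCommGroup (Δ l)] [∀ l, Module R (Δ l)]
    [∀ l, Module A (Δ l)] [∀ l, IsScalarTower R A (Δ l)]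
    (N : Λ → Type) [∀ l, AddCommGroup (N l)] [∀ l, Module R (N l)]
    [∀ l, Module A (N l)] [∀ l, IsScalarTower R A (N l)] : Prop :=
  Nonempty (SplitQH R Aᵐᵒᵖ Λ (fun l => (N l →ₗ[R] R))) ∧
  (∀ l, Nonempty ((Δ l →ₗ[A] N l) ≃ₗ[R] R)) ∧
  (∀ l m, l ≠ m → ∀ f : Δ l →ₗ[A] N m, f = 0) ∧
  (∀ l m : Λ, ∀ i : ℕ, 0 < i → extVanish A (Δ l) (N m) i)

/-- A bundled family of costandard modules. -/
structure CostandardFamily (Δ : Λ → Type) [∀ l, AddCommGroup (Δ l)] [∀ l, Module R (Δ l)]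
    [∀ l, Module A (Δ l)] [∀ l, IsScalarTower R A (Δ l)] : Type 1 where
  Nab : Λ → Type
  [acg : ∀ l, AddCommGroup (Nab l)]
  [modR : ∀ l, Module R (Nab l)]
  [modA : ∀ l, Module A (Nab l)]
  [tower : ∀ l, IsScalarTower R A (Nab l)]
  cost : IsCostandard R A Λ Δ Nab

attribute [instance] CostandardFamily.acg CostandardFamily.modR CostandardFamily.modA
  CostandardFamily.tower

/-- `T` is a family of (partial) tilting modules forming a characteristic tilting module
`⊕ T(λ)`: each `T(λ)` admits an exact sequence `0 → Δ(λ) → T(λ) → X(λ) → 0` with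
`X(λ) ∈ F(Δ̃_{μ<λ})` and an exact sequence `0 → Y(λ) → T(λ) → ∇(λ) → 0` with
`Y(λ) ∈ F(∇̃_{μ<λ})`. -/
def IsCharTilting (Δ : Λ → Type) [∀ l, AddCommGroup (Δ l)] [∀ l, Module R (Δ l)]
    [∀ l, Module A (Δ l)] [∀ l, IsScalarTower R A (Δ l)]
    (N : Λ → Type) [∀ l, AddCommGroup (N l)] [∀ l, Module R (N l)]
    [∀ l, Module A (N l)] [∀ l, IsScalarTower R A (N l)]
    (T : Λ → Type) [∀ l, AddCommGroup (T l)] [∀ l, Module A (T l)] : Prop :=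
  ∀ l : Λ,
    (∃ f : Δ l →ₗ[A] T l, Function.Injective f ∧
      InFilt R A Λ Δ {m | m < l} ((T l) ⧸ LinearMap.range f)) ∧
    (∃ g : T l →ₗ[A] N l, Function.Surjective g ∧
      InFilt R A Λ N {m | m < l} ↥(LinearMap.ker g))

end Core

end

/-!
For a module `M`, let `G_m(M)` be `Hom_A(P(m), M)` modulo the homomorphisms which factor through
finite sums of `P(μ)` with `μ > m`. On modules built from standard modules by extensions and direct
summands `G_m` is an exact functor which counts the factors `Δ(m)`: it kills `Δ(l)` for `l ≠ m`, and
`G_m(Δ(m))` is free of rank one on the epimorphism `P(m) → Δ(m)`.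

The standard modules of `A^op` are the right modules `G_m(A)`. For upper sets `T` of weights, the
homomorphisms `Q → A` factoring through the `P(μ)`, `μ ∈ T`, filter the right module `Hom_A(Q, A)`
when `Q` is projective, and adding a weight `m` to `T` contributes `G_m(A) ⊗_R Hom_A(Q, Δ(m))`.

Put `∇(m) = D G_m(A)`. Since `G_m(M) = G_m(A) ⊗_A M`, adjunction gives `Hom_A(M, ∇(m)) = D G_m(M)`,
so exactness of `G_m` yields the `Ext`-orthogonality. If `N` satisfies the same orthogonality
relations as `∇(m)`, then `G_m(N) ≃ Hom_A(Δ(m), N) ≃ R`, and this linear form is adjoint to a map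
`N → ∇(m)` that induces bijections on all `Hom_A(Δ(l), -)`. As `Ext^1_A(Δ(l), N) = 0`, its kernel
and its cokernel receive no nonzero maps from standard modules, and so both vanish, because `A`
itself is built from standard modules.
-/

section ExtVanish

variable {A : Type} [Ring A] {M' M X N : Type} [AddCommGroup M'] [Module A M'] [AddCommGroup M]
  [Module A M] [AddCommGroup X] [Module A X] [AddCommGroup N] [Module A N]

lemma extVanish_succ_iff_forall_exists (Q : ProjectiveResolution (ModuleCat.of A M)) (i : ℕ) :
    extVanish A M N (i + 1) ↔
      ∀ f : Q.complex.X (i + 1) ⟶ ModuleCat.of A N, Q.complex.d (i + 2) (i + 1) ≫ f = 0 →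
        ∃ g : Q.complex.X i ⟶ ModuleCat.of A N, Q.complex.d (i + 1) i ≫ g = f := by
  unfold extVanish
  rw [← ModuleCat.isZero_iff_subsingleton,
    (Q.isoExt (R := ℤ) (i + 1) (ModuleCat.of A N)).isZero_iff,
    ← HomologicalComplex.exactAt_iff_isZero_homology,
    HomologicalComplex.exactAt_iff' _ i (i + 1) (i + 2) (by simp) (by simp),
    ShortComplex.moduleCat_exact_iff]
  rfl

lemma extVanish_succ_iff_forall_eq_zero (i : ℕ) :
    extVanish A M N (i + 1) ↔
      ∀ x : Abelian.Ext (ModuleCat.of A M) (ModuleCat.of A N) (i + 1), x = 0 := by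
  let Q := projectiveResolution (ModuleCat.of A M)
  rw [extVanish_succ_iff_forall_exists Q]
  constructor
  · intro h x
    obtain ⟨f, hf, rfl⟩ := Q.extMk_surjective x (i + 2) rfl
    exact (Q.extMk_eq_zero_iff f (i + 2) rfl hf i rfl).2 (h f hf)
  · intro h f hf
    exact (Q.extMk_eq_zero_iff f (i + 2) rfl hf i rfl).1 (h _)

lemma extVanish_succ_of_projective [Module.Projective A M] (i : ℕ) :
    extVanish A M N (i + 1) := by
  have : Projective (ModuleCat.of A M) := (IsProjective.iff_projective M).1 inferInstance
  exact (extVanish_succ_iff_forall_eq_zero i).2 Abelian.Ext.eq_zero_of_projective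

lemma extVanish_succ_of_retract {s : X →ₗ[A] M} {r : M →ₗ[A] X} (hrs : r ∘ₗ s = LinearMap.id)
    {i : ℕ} (h : extVanish A M N (i + 1)) : extVanish A X N (i + 1) := by
  rw [extVanish_succ_iff_forall_eq_zero] at h ⊢
  intro x
  have hrs' : ModuleCat.ofHom s ≫ ModuleCat.ofHom r = 𝟙 (ModuleCat.of A X) := by
    ext1
    exact hrs
  rw [← Abelian.Ext.mk₀_id_comp x, ← hrs', ← Abelian.Ext.mk₀_comp_mk₀,
    Abelian.Ext.comp_assoc_of_second_deg_zero, h ((Abelian.Ext.mk₀ _).comp x (zero_add _)),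
    Abelian.Ext.comp_zero]

variable {ι : M' →ₗ[A] M} {π : M →ₗ[A] X}

/-- The complex `M' ⟶ M ⟶ X` in the category of modules attached to an exact pair of linear
maps, to which the long exact sequences of `Ext` apply. -/
abbrev moduleShortComplex (h : Function.Exact ι π) : ShortComplex (ModuleCat.{0} A) :=
  ShortComplex.mk (ModuleCat.ofHom ι) (ModuleCat.ofHom π)
    (by ext x; exact h.apply_apply_eq_zero x)

lemma moduleShortComplex_shortExact (h : Function.Exact ι π) (hι : Function.Injective ι)
    (hπ : Function.Surjective π) : (moduleShortComplex h).ShortExact where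
  exact := (ShortComplex.ShortExact.moduleCat_exact_iff_function_exact _).mpr h
  mono_f := (ModuleCat.mono_iff_injective _).mpr hι
  epi_g := (ModuleCat.epi_iff_surjective _).mpr hπ

lemma extVanish_succ_of_exact (h : Function.Exact ι π) (hι : Function.Injective ι)
    (hπ : Function.Surjective π) {i : ℕ} (hM' : extVanish A M' N (i + 1))
    (hX : extVanish A X N (i + 1)) : extVanish A M N (i + 1) := by
  rw [extVanish_succ_iff_forall_eq_zero] at hM' hX ⊢
  intro x
  obtain ⟨y, rfl⟩ := Abelian.Ext.contravariant_sequence_exact₂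
    (moduleShortComplex_shortExact h hι hπ) (ModuleCat.of A N) x (hM' _)
  rw [hX y, Abelian.Ext.comp_zero]

lemma extVanish_add_two_of_exact_of_projective [Module.Projective A M] (h : Function.Exact ι π)
    (hι : Function.Injective ι) (hπ : Function.Surjective π) {i : ℕ}
    (hM' : extVanish A M' N (i + 1)) : extVanish A X N (i + 2) := by
  have : Projective (ModuleCat.of A M) := (IsProjective.iff_projective M).1 inferInstance
  rw [extVanish_succ_iff_forall_eq_zero] at hM' ⊢
  intro x
  obtain ⟨y, rfl⟩ := Abelian.Ext.contravariant_sequence_exact₃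
    (moduleShortComplex_shortExact h hι hπ) (ModuleCat.of A N) x
    (Abelian.Ext.eq_zero_of_projective (P := ModuleCat.of A M) _) (add_comm 1 (i + 1))
  rw [hM' y, Abelian.Ext.comp_zero]

lemma exists_lift_of_extVanish_one (h : Function.Exact ι π) (hι : Function.Injective ι)
    (hπ : Function.Surjective π) (hM' : extVanish A N M' 1) (f : N →ₗ[A] X) :
    ∃ g : N →ₗ[A] M, π ∘ₗ g = f := by
  obtain ⟨x, hx⟩ := Abelian.Ext.covariant_sequence_exact₃ (ModuleCat.of A N)
    (moduleShortComplex_shortExact h hι hπ)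
    (Abelian.Ext.mk₀ (ModuleCat.ofHom f)) (n₁ := 1) rfl
    ((extVanish_succ_iff_forall_eq_zero 0).1 hM' _)
  obtain ⟨g, rfl⟩ := (Abelian.Ext.mk₀_bijective _ _).2 x
  rw [Abelian.Ext.mk₀_comp_mk₀] at hx
  exact ⟨g.hom, congrArg ModuleCat.Hom.hom ((Abelian.Ext.mk₀_bijective _ _).1 hx)⟩

lemma extVanish_one_of_forall_exists_extend [Module.Projective A M] (h : Function.Exact ι π)
    (hι : Function.Injective ι) (hπ : Function.Surjective π)
    (hN : ∀ f : M' →ₗ[A] N, ∃ g : M →ₗ[A] N, g ∘ₗ ι = f) : extVanish A X N 1 := by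
  have hS := moduleShortComplex_shortExact h hι hπ
  have : Projective (ModuleCat.of A M) := (IsProjective.iff_projective M).1 inferInstance
  rw [extVanish_succ_iff_forall_eq_zero]
  intro x
  obtain ⟨y, rfl⟩ := Abelian.Ext.contravariant_sequence_exact₃ hS (ModuleCat.of A N) x
    (Abelian.Ext.eq_zero_of_projective (P := ModuleCat.of A M) (n := 0) _) (n₀ := 0) rfl
  obtain ⟨f, rfl⟩ := (Abelian.Ext.mk₀_bijective _ _).2 y
  obtain ⟨g, hg⟩ := hN f.hom
  have hfg : f = (moduleShortComplex h).f ≫ ModuleCat.ofHom g := by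
    ext1
    exact hg.symm
  rw [hfg, ← Abelian.Ext.mk₀_comp_mk₀, hS.extClass_comp_assoc]

end ExtVanish

section Desc

variable {B L M X Y : Type*} [Ring B] [AddCommGroup L] [Module B L] [AddCommGroup M] [Module B M]
  [AddCommGroup X] [Module B X] [AddCommGroup Y] [Module B Y]

lemma exists_desc_of_exact {ι : L →ₗ[B] M} {π : M →ₗ[B] X} (h : Function.Exact ι π)
    (hπ : Function.Surjective π) {f : M →ₗ[B] Y} (hf : f ∘ₗ ι = 0) :
    ∃ g : X →ₗ[B] Y, g ∘ₗ π = f := by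
  refine ⟨(LinearMap.range ι).liftQ f (LinearMap.range_le_ker_iff.2 hf) ∘ₗ
    (h.linearEquivOfSurjective hπ).symm.toLinearMap, ?_⟩
  ext x
  simp

lemma exists_factor_of_exact {ι : L →ₗ[B] M} {π : M →ₗ[B] X} (h : Function.Exact ι π)
    (hι : Function.Injective ι) {f : Y →ₗ[B] M} (hf : π ∘ₗ f = 0) :
    ∃ g : Y →ₗ[B] L, ι ∘ₗ g = f :=
  have hrange (y : Y) : f y ∈ LinearMap.range ι := (h (f y)).1 (LinearMap.congr_fun hf y)
  ⟨(LinearEquiv.ofInjective ι hι).symm.toLinearMap ∘ₗ f.codRestrict _ hrange, by ext; simp⟩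

end Desc

section StdClosure

variable (R : Type) [CommRing R] (A : Type) [Ring A] [Algebra R A] {Λ : Type}
  (Δ : Λ → Type) [∀ l, AddCommGroup (Δ l)] [∀ l, Module R (Δ l)]
  [∀ l, Module A (Δ l)] [∀ l, IsScalarTower R A (Δ l)]

/-- The smallest class of modules containing `Δ(λ)`, `λ ∈ S`, and closed under extensions and
direct summands. It contains `F(Δ̃_S)` and, unlike the latter, is visibly closed under direct
summands, which is what puts the projective modules of a split quasi-hereditary algebra in it. -/
inductive StdClosure (S : Set Λ) : ∀ (M : Type) [AddCommGroup M] [Module R M] [Module A M]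
    [IsScalarTower R A M], Prop
  | zero (M : Type) [AddCommGroup M] [Module R M] [Module A M] [IsScalarTower R A M]
      [Subsingleton M] : StdClosure S M
  | std (l : Λ) (hl : l ∈ S) : StdClosure S (Δ l)
  | retract (X Y : Type) [AddCommGroup X] [Module R X] [Module A X] [IsScalarTower R A X]
      [AddCommGroup Y] [Module R Y] [Module A Y] [IsScalarTower R A Y]
      (s : X →ₗ[A] Y) (r : Y →ₗ[A] X) (hrs : r ∘ₗ s = LinearMap.id) :
      StdClosure S Y → StdClosure S X
  | ext (M' M X : Type) [AddCommGroup M'] [Module R M'] [Module A M'] [IsScalarTower R A M']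
      [AddCommGroup M] [Module R M] [Module A M] [IsScalarTower R A M]
      [AddCommGroup X] [Module R X] [Module A X] [IsScalarTower R A X]
      (ι : M' →ₗ[A] M) (π : M →ₗ[A] X) (hι : Function.Injective ι) (hπ : Function.Surjective π)
      (h : Function.Exact ι π) : StdClosure S M' → StdClosure S X → StdClosure S M

namespace StdClosure

variable {R A Δ} {S : Set Λ} {X Y : Type} [AddCommGroup X] [Module R X] [Module A X]
  [IsScalarTower R A X] [AddCommGroup Y] [Module R Y] [Module A Y] [IsScalarTower R A Y]

lemma of_linearEquiv (e : X ≃ₗ[A] Y) (h : StdClosure R A Δ S Y) : StdClosure R A Δ S X :=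
  .retract X Y e.toLinearMap e.symm.toLinearMap (LinearMap.ext e.symm_apply_apply) h

lemma mono {T : Set Λ} (hST : S ⊆ T) (h : StdClosure R A Δ S X) : StdClosure R A Δ T X := by
  induction h with
  | zero M => exact .zero M
  | std l hl => exact .std l (hST hl)
  | retract X Y s r hrs _ ih => exact .retract X Y s r hrs ih
  | ext M' M X ι π hι hπ h _ _ ih' ih => exact .ext M' M X ι π hι hπ h ih' ih

lemma of_surjective (π : X →ₗ[A] Y) (hπ : Function.Surjective π)
    (hker : StdClosure R A Δ S (LinearMap.ker π)) (hY : StdClosure R A Δ S Y) :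
    StdClosure R A Δ S X :=
  .ext _ X Y (LinearMap.ker π).subtype π (Submodule.injective_subtype _) hπ
    (LinearMap.exact_subtype_ker_map π) hker hY

lemma prod (hX : StdClosure R A Δ S X) (hY : StdClosure R A Δ S Y) :
    StdClosure R A Δ S (X × Y) :=
  .ext X (X × Y) Y (.inl A X Y) (.snd A X Y) LinearMap.inl_injective LinearMap.snd_surjective
    .inl_snd hX hY

lemma pi {ι : Type} [Finite ι] (M : ι → Type) [∀ i, AddCommGroup (M i)] [∀ i, Module R (M i)]
    [∀ i, Module A (M i)] [∀ i, IsScalarTower R A (M i)] (h : ∀ i, StdClosure R A Δ S (M i)) :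
    StdClosure R A Δ S (∀ i, M i) := by
  induction ι using Finite.induction_empty_option with
  | of_equiv e ih =>
    exact (ih (fun i => M (e i)) fun i => h (e i)).of_linearEquiv
      (LinearEquiv.piCongrLeft A M e).symm
  | h_empty => exact .zero _
  | h_option ih =>
    exact ((h none).prod (ih (fun i => M (some i)) fun i => h (some i))).of_linearEquiv
      (LinearEquiv.piOptionEquivProd A)

lemma tensor (h : StdClosure R A Δ S X) (U : Type) [AddCommGroup U] [Module R U]
    [Module.Finite R U] [Module.Projective R U] : StdClosure R A Δ S (X ⊗[R] U) := by
  obtain ⟨n, r, s, -, -, hrs⟩ := Module.Finite.exists_comp_eq_id_of_projective R U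
  let e := Finsupp.linearEquivFunOnFinite R R (Fin n)
  have hfinsupp : StdClosure R A Δ S (X ⊗[R] (Fin n →₀ R)) :=
    (pi (fun _ : Fin n => X) fun _ => h).of_linearEquiv
      (TensorProduct.finsuppScalarRight R A X (Fin n) ≪≫ₗ
        Finsupp.linearEquivFunOnFinite A X (Fin n))
  refine .retract _ _ (TensorProduct.AlgebraTensorModule.lTensor A X (e.symm.toLinearMap ∘ₗ s))
    (TensorProduct.AlgebraTensorModule.lTensor A X (r ∘ₗ e.toLinearMap)) ?_ hfinsupp
  rw [← TensorProduct.AlgebraTensorModule.lTensor_comp, LinearMap.comp_assoc,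
    ← LinearMap.comp_assoc s, e.comp_symm, LinearMap.id_comp, hrs,
    TensorProduct.AlgebraTensorModule.lTensor_id]

variable {N N' : Type} [AddCommGroup N] [Module A N] [AddCommGroup N'] [Module A N']

lemma hom_eq_zero (hX : StdClosure R A Δ S X) (hN : ∀ l ∈ S, ∀ f : Δ l →ₗ[A] N, f = 0)
    (f : X →ₗ[A] N) : f = 0 := by
  induction hX with
  | zero M => exact Subsingleton.elim _ _
  | std l hl => exact hN l hl f
  | retract X Y s r hrs _ ih =>
    rw [← LinearMap.comp_id f, ← hrs, ← LinearMap.comp_assoc, ih (f ∘ₗ r), LinearMap.zero_comp]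
  | ext M' M X ι π _ hπ h _ _ ih' ih =>
    obtain ⟨g, rfl⟩ := exists_desc_of_exact h hπ (ih' (f ∘ₗ ι))
    rw [ih g, LinearMap.zero_comp]

lemma extVanish (hX : StdClosure R A Δ S X) {i : ℕ}
    (hN : ∀ l ∈ S, extVanish A (Δ l) N (i + 1)) : extVanish A X N (i + 1) := by
  induction hX with
  | zero M => exact extVanish_succ_of_projective i
  | std l hl => exact hN l hl
  | retract X Y s r hrs _ ih => exact extVanish_succ_of_retract hrs ih
  | ext M' M X ι π hι hπ h _ _ ih' ih => exact extVanish_succ_of_exact h hι hπ ih' ih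

lemma subsingleton_of_hom_eq_zero (hA : StdClosure R A Δ S A)
    (hN : ∀ l ∈ S, ∀ f : Δ l →ₗ[A] N, f = 0) : Subsingleton N :=
  subsingleton_of_forall_eq 0 fun x => by
    simpa using LinearMap.congr_fun (hA.hom_eq_zero hN (LinearMap.toSpanSingleton A N x)) 1

lemma bijective_of_bijective_comp (hA : StdClosure R A Δ S A) (g : N →ₗ[A] N')
    (hN : ∀ l ∈ S, _root_.extVanish A (Δ l) N 1)
    (hg : ∀ l ∈ S, Function.Bijective fun f : Δ l →ₗ[A] N => g ∘ₗ f) : Function.Bijective g := by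
  have hinj : Function.Injective g := by
    have : Subsingleton (LinearMap.ker g) := hA.subsingleton_of_hom_eq_zero fun l hl f => by
      have hf : (LinearMap.ker g).subtype ∘ₗ f = 0 := (hg l hl).1 (by ext; simp)
      ext x
      exact LinearMap.congr_fun hf x
    exact LinearMap.ker_eq_bot.1 (Submodule.subsingleton_iff_eq_bot.1 this)
  refine ⟨hinj, ?_⟩
  have : Subsingleton (N' ⧸ LinearMap.range g) :=
    hA.subsingleton_of_hom_eq_zero fun l hl f => by
      obtain ⟨f', rfl⟩ := exists_lift_of_extVanish_one (LinearMap.exact_map_mkQ_range g) hinj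
        (Submodule.mkQ_surjective _) (hN l hl) f
      obtain ⟨f'', rfl⟩ := (hg l hl).2 f'
      ext x
      simp
  exact LinearMap.range_eq_top.1 (Submodule.Quotient.subsingleton_iff.1 this)

end StdClosure

variable {R A Δ} {S : Set Λ} {X : Type} [AddCommGroup X] [Module R X] [Module A X]
  [IsScalarTower R A X]

lemma InFilt.stdClosure (h : InFilt R A Λ Δ S X) : StdClosure R A Δ S X := by
  obtain ⟨-, n, c, hc_bot, hc_top, hc_mono, hc⟩ := h
  have hc_mem (i : Fin (n + 1)) : StdClosure R A Δ S (c i) := by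
    induction i using Fin.induction with
    | zero =>
      rw [hc_bot]
      exact .zero _
    | succ i ih =>
      have hle : c i.castSucc ≤ c i.succ := hc_mono i.castSucc_lt_succ.le
      obtain ⟨⟨l, hl, U, _, _, e⟩⟩ := hc i
      refine .of_surjective (Submodule.mkQ _) (Submodule.mkQ_surjective _) ?_
        (((StdClosure.std l hl).tensor U).of_linearEquiv e)
      rw [Submodule.ker_mkQ]
      exact ih.of_linearEquiv (Submodule.comapSubtypeEquivOfLe hle)
  have := hc_mem (Fin.last n)
  rw [hc_top] at this
  exact this.of_linearEquiv Submodule.topEquiv.symm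

end StdClosure

section HomThrough

variable (A : Type*) [Ring A] {Λ : Type*} (P : Λ → Type*) [∀ l, AddCommGroup (P l)]
  [∀ l, Module A (P l)] (T : Set Λ) (Q M : Type*) [AddCommGroup Q] [Module A Q]
  [AddCommGroup M] [Module A M]

/-- The homomorphisms `Q → M` factoring through a finite direct sum of modules `P(μ)`, `μ ∈ T`,
presented as the finite sums of homomorphisms factoring through a single `P(μ)`. -/
def homThrough : AddSubgroup (Q →ₗ[A] M) where
  __ := AddSubmonoid.closure
    {f | ∃ μ ∈ T, ∃ (F : P μ →ₗ[A] M) (h : Q →ₗ[A] P μ), F ∘ₗ h = f}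
  neg_mem' {f} hf := by
    refine AddSubmonoid.closure_induction (motive := fun f _ => -f ∈ AddSubmonoid.closure _)
      ?_ ?_ ?_ hf
    · rintro _ ⟨μ, hμ, F, h, rfl⟩
      exact AddSubmonoid.subset_closure ⟨μ, hμ, -F, h, rfl⟩
    · simp
    · intro f g _ _ hf hg
      rw [neg_add]
      exact add_mem hf hg

variable {A P T Q M} {M' X Q' : Type*} [AddCommGroup M'] [Module A M'] [AddCommGroup X] [Module A X]
  [AddCommGroup Q'] [Module A Q']

lemma comp_mem_homThrough {μ : Λ} (hμ : μ ∈ T) (F : P μ →ₗ[A] M) (h : Q →ₗ[A] P μ) :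
    F ∘ₗ h ∈ homThrough A P T Q M :=
  AddSubmonoid.subset_closure ⟨μ, hμ, F, h, rfl⟩

@[elab_as_elim]
lemma homThrough_induction {motive : (f : Q →ₗ[A] M) → f ∈ homThrough A P T Q M → Prop}
    (comp : ∀ (μ : Λ) (hμ : μ ∈ T) (F : P μ →ₗ[A] M) (h : Q →ₗ[A] P μ),
      motive (F ∘ₗ h) (comp_mem_homThrough hμ F h))
    (zero : motive 0 (zero_mem _))
    (add : ∀ f g hf hg, motive f hf → motive g hg → motive (f + g) (add_mem hf hg))
    {f : Q →ₗ[A] M} (hf : f ∈ homThrough A P T Q M) : motive f hf := by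
  refine AddSubmonoid.closure_induction (motive := motive) ?_ zero add hf
  rintro _ ⟨μ, hμ, F, h, rfl⟩
  exact comp μ hμ F h

lemma homThrough_comp_mem_left (g : M →ₗ[A] M') {f : Q →ₗ[A] M}
    (hf : f ∈ homThrough A P T Q M) : g ∘ₗ f ∈ homThrough A P T Q M' := by
  induction hf using homThrough_induction with
  | comp μ hμ F h =>
    rw [← LinearMap.comp_assoc]
    exact comp_mem_homThrough hμ (g ∘ₗ F) h
  | zero =>
    rw [LinearMap.comp_zero]
    exact zero_mem _
  | add f f' _ _ ih ih' =>
    rw [LinearMap.comp_add]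
    exact add_mem ih ih'

lemma homThrough_comp_mem_right {f : Q →ₗ[A] M} (hf : f ∈ homThrough A P T Q M)
    (k : Q' →ₗ[A] Q) : f ∘ₗ k ∈ homThrough A P T Q' M := by
  induction hf using homThrough_induction with
  | comp μ hμ F h =>
    rw [LinearMap.comp_assoc]
    exact comp_mem_homThrough hμ F (h ∘ₗ k)
  | zero =>
    rw [LinearMap.zero_comp]
    exact zero_mem _
  | add f f' _ _ ih ih' =>
    rw [LinearMap.add_comp]
    exact add_mem ih ih'

lemma homThrough_mono {T' : Set Λ} (hT : T ⊆ T') :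
    homThrough A P T Q M ≤ homThrough A P T' Q M := by
  intro f hf
  induction hf using homThrough_induction with
  | comp μ hμ F h => exact comp_mem_homThrough (hT hμ) F h
  | zero => exact zero_mem _
  | add f g _ _ ih ih' => exact add_mem ih ih'

lemma homThrough_eq_bot (hM : ∀ μ ∈ T, ∀ F : P μ →ₗ[A] M, F = 0) :
    homThrough A P T Q M = ⊥ := by
  rw [AddSubgroup.eq_bot_iff_forall]
  intro f hf
  induction hf using homThrough_induction with
  | comp μ hμ F h => rw [hM μ hμ F, LinearMap.zero_comp]
  | zero => rfl
  | add f g _ _ ih ih' => rw [ih, ih', add_zero]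

lemma exists_mem_homThrough_comp_eq [∀ l, Module.Projective A (P l)] {π : M →ₗ[A] X}
    (hπ : Function.Surjective π) {f : Q →ₗ[A] X} (hf : f ∈ homThrough A P T Q X) :
    ∃ g ∈ homThrough A P T Q M, π ∘ₗ g = f := by
  induction hf using homThrough_induction with
  | comp μ hμ F h =>
    obtain ⟨G, rfl⟩ := Module.projective_lifting_property π F hπ
    exact ⟨G ∘ₗ h, comp_mem_homThrough hμ G h, rfl⟩
  | zero => exact ⟨0, zero_mem _, LinearMap.comp_zero π⟩
  | add f f' _ _ ih ih' =>
    obtain ⟨g, hg, rfl⟩ := ih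
    obtain ⟨g', hg', rfl⟩ := ih'
    exact ⟨g + g', add_mem hg hg', LinearMap.comp_add g g' π⟩

end HomThrough

section HomQuot

variable (A : Type*) [Ring A] {Λ : Type*} (P : Λ → Type*) [∀ l, AddCommGroup (P l)]
  [∀ l, Module A (P l)] (S : Type*) [Ring S] (T : Set Λ) (Q M : Type*) [AddCommGroup Q]
  [Module A Q] [AddCommGroup M] [Module A M] [Module S M] [SMulCommClass A S M]

/-- `homThrough` as a submodule over a ring `S` of scalars acting on the target; both `S = R` and,
for `M = A`, `S = Aᵐᵒᵖ` are needed. -/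
def homThroughSubmodule : Submodule S (Q →ₗ[A] M) where
  __ := homThrough A P T Q M
  smul_mem' s _ hf := homThrough_comp_mem_left (s • LinearMap.id) hf

/-- `Hom(Q, M)` modulo the homomorphisms factoring through direct sums of the `P(μ)`, `μ ∈ T`. -/
abbrev HomQuot : Type _ := (Q →ₗ[A] M) ⧸ homThroughSubmodule A P S T Q M

namespace HomQuot

variable {A P S T Q M}

lemma mk_eq_zero {f : Q →ₗ[A] M} :
    (Submodule.Quotient.mk f : HomQuot A P S T Q M) = 0 ↔ f ∈ homThrough A P T Q M :=
  Submodule.Quotient.mk_eq_zero _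

lemma mk_eq_mk {f g : Q →ₗ[A] M} :
    (Submodule.Quotient.mk f : HomQuot A P S T Q M) = Submodule.Quotient.mk g ↔
      f - g ∈ homThrough A P T Q M :=
  Submodule.Quotient.eq _

lemma subsingleton_iff : Subsingleton (HomQuot A P S T Q M) ↔
    ∀ f : Q →ₗ[A] M, f ∈ homThrough A P T Q M := by
  rw [Submodule.Quotient.subsingleton_iff, Submodule.eq_top_iff']
  rfl

variable {M' X : Type*} [AddCommGroup M'] [Module A M'] [Module S M'] [SMulCommClass A S M']
  [AddCommGroup X] [Module A X] [Module S X] [SMulCommClass A S X]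

section Map

variable [LinearMap.CompatibleSMul M M' S A]

variable (P S T Q) in
/-- Functoriality of `HomQuot` in the target. -/
def map (g : M →ₗ[A] M') : HomQuot A P S T Q M →ₗ[S] HomQuot A P S T Q M' :=
  Submodule.mapQ _ _ (LinearMap.compRight S g) fun _ => homThrough_comp_mem_left g

@[simp]
lemma map_mk (g : M →ₗ[A] M') (f : Q →ₗ[A] M) :
    map P S T Q g (Submodule.Quotient.mk f) = Submodule.Quotient.mk (g ∘ₗ f) :=
  rfl

end Map

lemma map_comp_map_eq_id [LinearMap.CompatibleSMul M M' S A] [LinearMap.CompatibleSMul M' M S A]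
    {s : M →ₗ[A] M'} {r : M' →ₗ[A] M} (hrs : r ∘ₗ s = LinearMap.id) :
    map P S T Q r ∘ₗ map P S T Q s = LinearMap.id := by
  ext f
  simp [← LinearMap.comp_assoc, hrs]

variable {ι : M' →ₗ[A] M} {π : M →ₗ[A] X} [LinearMap.CompatibleSMul M X S A]

lemma map_surjective [Module.Projective A Q] (hπ : Function.Surjective π) :
    Function.Surjective (map P S T Q π) := by
  intro y
  obtain ⟨f, rfl⟩ := Submodule.Quotient.mk_surjective _ y
  obtain ⟨g, rfl⟩ := Module.projective_lifting_property π f hπ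
  exact ⟨Submodule.Quotient.mk g, rfl⟩

lemma map_exact [LinearMap.CompatibleSMul M' M S A] [∀ l, Module.Projective A (P l)]
    (h : Function.Exact ι π) (hι : Function.Injective ι) (hπ : Function.Surjective π) :
    Function.Exact (map P S T Q ι) (map P S T Q π) := by
  intro y
  obtain ⟨f, rfl⟩ := Submodule.Quotient.mk_surjective _ y
  constructor
  · intro hf
    rw [map_mk, mk_eq_zero] at hf
    obtain ⟨g, hg, hgf⟩ := exists_mem_homThrough_comp_eq hπ hf
    obtain ⟨f', hf'⟩ := exists_factor_of_exact h hι (f := f - g)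
      (by rw [LinearMap.comp_sub, hgf, sub_self])
    refine ⟨Submodule.Quotient.mk f', ?_⟩
    rwa [map_mk, hf', mk_eq_mk, sub_sub_cancel_left, neg_mem_iff]
  · rintro ⟨z, hz⟩
    obtain ⟨f', rfl⟩ := Submodule.Quotient.mk_surjective _ z
    rw [← hz, map_mk, map_mk, ← LinearMap.comp_assoc, h.linearMap_comp_eq_zero,
      LinearMap.zero_comp, Submodule.Quotient.mk_zero]

end HomQuot

end HomQuot

section HomPure

variable (A : Type) [Ring A] {Λ : Type} (P : Λ → Type) [∀ l, AddCommGroup (P l)]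
  [∀ l, Module A (P l)] (T : Set Λ) (Q X : Type) [AddCommGroup Q] [Module A Q]
  [AddCommGroup X] [Module A X]

/-- Every extension of `X` is pure as seen by the homomorphisms from `Q` through the `P(μ)`,
`μ ∈ T`: if `f : Q → M'` factors through them after enlarging the target to an extension of `X`
by `M'`, then so does `f` itself. -/
def HomPure : Prop :=
  ∀ (M' M : Type) [AddCommGroup M'] [Module A M'] [AddCommGroup M] [Module A M]
    (ι : M' →ₗ[A] M) (π : M →ₗ[A] X), Function.Exact ι π → Function.Injective ι →
    Function.Surjective π → ∀ f : Q →ₗ[A] M', ι ∘ₗ f ∈ homThrough A P T Q M →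
      f ∈ homThrough A P T Q M'

namespace HomPure

variable {A P T Q X} {N Y : Type} [AddCommGroup N] [Module A N] [AddCommGroup Y] [Module A Y]

lemma of_subsingleton [Subsingleton X] : HomPure A P T Q X := by
  intro M' M _ _ _ _ ι π h hι _ f hf
  obtain ⟨j, hj⟩ := exists_factor_of_exact h hι (f := LinearMap.id) (Subsingleton.elim _ _)
  have hj' : j ∘ₗ ι = LinearMap.id := by
    ext x
    exact hι (LinearMap.congr_fun hj (ι x))
  rw [← LinearMap.id_comp f, ← hj', LinearMap.comp_assoc]
  exact homThrough_comp_mem_left j hf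

lemma of_retract {s : X →ₗ[A] Y} {r : Y →ₗ[A] X} (hrs : r ∘ₗ s = LinearMap.id)
    (hY : HomPure A P T Q Y) : HomPure A P T Q X := by
  intro M' M _ _ _ _ ι π h hι hπ f hf
  have hrs' (x : X) : r (s x) = x := LinearMap.congr_fun hrs x
  let π' : M × LinearMap.ker r →ₗ[A] Y := (s ∘ₗ π).coprod (LinearMap.ker r).subtype
  refine hY M' (M × LinearMap.ker r) (LinearMap.inl A M _ ∘ₗ ι) π' ?_
    (LinearMap.inl_injective.comp hι) (fun y => ?_) f ?_
  · rintro ⟨x, y, hy⟩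
    rw [LinearMap.mem_ker] at hy
    constructor
    · intro hxy
      replace hxy : s (π x) + y = 0 := hxy
      have hx : π x = 0 := by simpa [hrs', hy] using congrArg r hxy
      obtain rfl : y = 0 := by simpa [hx] using hxy
      obtain ⟨z, rfl⟩ := (h x).1 hx
      exact ⟨z, rfl⟩
    · rintro ⟨z, hz⟩
      rw [← hz]
      simp [π', h.apply_apply_eq_zero]
  · obtain ⟨x, hx⟩ := hπ (r y)
    exact ⟨(x, ⟨y - s (r y), by simp [hrs']⟩), by simp [π', hx]⟩
  · rw [LinearMap.comp_assoc]
    exact homThrough_comp_mem_left _ hf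

lemma of_exact {ι₀ : N →ₗ[A] Y} {π₀ : Y →ₗ[A] X} (h₀ : Function.Exact ι₀ π₀)
    (hι₀ : Function.Injective ι₀) (hπ₀ : Function.Surjective π₀) (hN : HomPure A P T Q N)
    (hX : HomPure A P T Q X) : HomPure A P T Q Y := by
  intro M' M _ _ _ _ ι π h hι hπ f hf
  let K := LinearMap.ker (π₀ ∘ₗ π)
  obtain ⟨κ, hκ⟩ : ∃ κ : M' →ₗ[A] K, K.subtype ∘ₗ κ = ι :=
    exists_factor_of_exact (LinearMap.exact_subtype_ker_map _) K.subtype_injective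
      (by rw [LinearMap.comp_assoc, h.linearMap_comp_eq_zero, LinearMap.comp_zero])
  obtain ⟨ρ, hρ⟩ : ∃ ρ : K →ₗ[A] N, ι₀ ∘ₗ ρ = π ∘ₗ K.subtype :=
    exists_factor_of_exact h₀ hι₀ ((LinearMap.exact_subtype_ker_map _).linearMap_comp_eq_zero)
  have hκ' (x : M') : (κ x : M) = ι x := LinearMap.congr_fun hκ x
  have hρ' (k : K) : ι₀ (ρ k) = π k := LinearMap.congr_fun hρ k
  refine hN M' K κ ρ (fun k => ?_) (fun x y hxy => ?_) (fun n => ?_) f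
    (hX K M K.subtype (π₀ ∘ₗ π) (LinearMap.exact_subtype_ker_map _) K.subtype_injective
      (hπ₀.comp hπ) (κ ∘ₗ f) ?_)
  · rw [← map_eq_zero_iff ι₀ hι₀, hρ', h]
    exact exists_congr fun x => by rw [← hκ', Subtype.ext_iff]
  · exact hι (by rw [← hκ', ← hκ', hxy])
  · obtain ⟨x, hx⟩ := hπ (ι₀ n)
    have hxK : x ∈ K := by
      rw [LinearMap.mem_ker, LinearMap.comp_apply, hx, h₀.apply_apply_eq_zero]
    exact ⟨⟨x, hxK⟩, hι₀ ((hρ' _).trans hx)⟩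
  · rwa [← LinearMap.comp_assoc, hκ]

end HomPure

end HomPure

section StdClosure

variable {R : Type} [CommRing R] {A : Type} [Ring A] [Algebra R A] {Λ : Type}
  {Δ : Λ → Type} [∀ l, AddCommGroup (Δ l)] [∀ l, Module R (Δ l)]
  [∀ l, Module A (Δ l)] [∀ l, IsScalarTower R A (Δ l)]
  {P : Λ → Type} [∀ l, AddCommGroup (P l)] [∀ l, Module A (P l)]
  {S T : Set Λ} {Q M : Type} [AddCommGroup Q] [Module A Q]
  [AddCommGroup M] [Module R M] [Module A M] [IsScalarTower R A M]

lemma StdClosure.mem_homThrough [∀ l, Module.Projective A (P l)] (hM : StdClosure R A Δ S M)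
    (hS : ∀ l ∈ S, ∀ f : Q →ₗ[A] Δ l, f ∈ homThrough A P T Q (Δ l)) (f : Q →ₗ[A] M) :
    f ∈ homThrough A P T Q M := by
  induction hM with
  | zero M =>
    rw [Subsingleton.elim f 0]
    exact zero_mem _
  | std l hl => exact hS l hl f
  | retract X Y s r hrs _ ih =>
    rw [← LinearMap.id_comp f, ← hrs, LinearMap.comp_assoc]
    exact homThrough_comp_mem_left r (ih (s ∘ₗ f))
  | ext M' M X ι π hι hπ h _ _ ih' ih =>
    obtain ⟨g, hg, hgf⟩ := exists_mem_homThrough_comp_eq hπ (ih (π ∘ₗ f))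
    obtain ⟨f', hf'⟩ := exists_factor_of_exact h hι (f := f - g)
      (by rw [LinearMap.comp_sub, hgf, sub_self])
    rw [← sub_add_cancel f g, ← hf']
    exact add_mem (homThrough_comp_mem_left ι (ih' f')) hg

end StdClosure

section IsStdCover

variable (R : Type) [CommRing R] {A : Type} [Ring A] [Algebra R A] {Λ : Type} [PartialOrder Λ]
  {Δ : Λ → Type} [∀ l, AddCommGroup (Δ l)] [∀ l, Module R (Δ l)]
  [∀ l, Module A (Δ l)] [∀ l, IsScalarTower R A (Δ l)]
  {P : Λ → Type} [∀ l, AddCommGroup (P l)] [∀ l, Module R (P l)]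
  [∀ l, Module A (P l)] [∀ l, IsScalarTower R A (P l)]

/-- Standard modules `Δ(λ)` with epimorphisms `P(λ) → Δ(λ)` as in a split quasi-hereditary algebra,
where membership in `F(Δ̃_S)` is relaxed to `StdClosure` and the projective generator enters only
through the condition that the regular module is built from standard modules. -/
structure IsStdCover (epi : ∀ l, P l →ₗ[A] Δ l) : Prop where
  proj : ∀ l, Module.Projective A (P l)
  fin : ∀ l, Module.Finite A (P l)
  surj : ∀ l, Function.Surjective (epi l)
  hom_le : ∀ l m (f : Δ l →ₗ[A] Δ m), f ≠ 0 → l ≤ m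
  endo : ∀ l, Function.Bijective (algebraMap R (Module.End A (Δ l)))
  ker : ∀ l, StdClosure R A Δ (Set.Ioi l) (LinearMap.ker (epi l))
  reg : StdClosure R A Δ Set.univ A

namespace IsStdCover

variable {R} {epi : ∀ l, P l →ₗ[A] Δ l} (hP : IsStdCover R epi)
include hP

lemma cover (l : Λ) : StdClosure R A Δ (Set.Ici l) (P l) :=
  .of_surjective (epi l) (hP.surj l) ((hP.ker l).mono Set.Ioi_subset_Ici_self) (.std l le_rfl)

lemma hom_eq_zero_of_not_le {l m : Λ} (hlm : ¬l ≤ m) (f : P l →ₗ[A] Δ m) : f = 0 :=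
  (hP.cover l).hom_eq_zero
    (fun k hk g => by_contra fun hg => hlm (le_trans hk (hP.hom_le k m g hg))) f

lemma hom_std_eq_zero_of_lt {m : Λ} : ∀ l ∈ Set.Ioi m, ∀ f : Δ l →ₗ[A] Δ m, f = 0 :=
  fun l hl f => by_contra fun hf => (hP.hom_le l m f hf).not_gt hl

variable {S T : Set Λ} {Q M : Type} [AddCommGroup Q] [Module A Q] [AddCommGroup M] [Module A M]

lemma exists_comp_epi_eq {m : Λ} (hM : ∀ l ∈ Set.Ioi m, ∀ f : Δ l →ₗ[A] M, f = 0)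
    (f : P m →ₗ[A] M) : ∃ g : Δ m →ₗ[A] M, g ∘ₗ epi m = f :=
  exists_desc_of_exact (LinearMap.exact_subtype_ker_map _) (hP.surj m)
    ((hP.ker m).hom_eq_zero hM _)

lemma homThrough_std_eq_bot {l : Λ} (hT : ∀ μ ∈ T, ¬μ ≤ l) : homThrough A P T Q (Δ l) = ⊥ :=
  homThrough_eq_bot fun μ hμ => hP.hom_eq_zero_of_not_le (hT μ hμ)

lemma mem_homThrough [Module R M] [IsScalarTower R A M] [Module.Projective A Q] (hST : S ⊆ T)
    (hM : StdClosure R A Δ S M) (f : Q →ₗ[A] M) : f ∈ homThrough A P T Q M := by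
  have := hP.proj
  refine hM.mem_homThrough (fun l hl g => ?_) f
  obtain ⟨d, rfl⟩ := Module.projective_lifting_property (epi l) g (hP.surj l)
  exact comp_mem_homThrough (hST hl) _ d

lemma sub_mem_homThrough_of_comp_eq [Module.Projective A Q] {m : Λ} {f g : Q →ₗ[A] P m}
    (hfg : epi m ∘ₗ f = epi m ∘ₗ g) : f - g ∈ homThrough A P (Set.Ioi m) Q (P m) := by
  obtain ⟨d, hd⟩ := exists_factor_of_exact (LinearMap.exact_subtype_ker_map (epi m))
    (Submodule.injective_subtype _) (f := f - g) (by rw [LinearMap.comp_sub, hfg, sub_self])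
  rw [← hd]
  exact homThrough_comp_mem_left _ (hP.mem_homThrough subset_rfl (hP.ker m) d)

lemma mem_homThrough_Ioi [Module R M] [IsScalarTower R A M] {m : Λ} (hm : m ∉ S)
    (hM : StdClosure R A Δ S M) (f : P m →ₗ[A] M) : f ∈ homThrough A P (Set.Ioi m) (P m) M := by
  have := hP.proj
  refine hM.mem_homThrough (fun l hl g => ?_) f
  by_cases hml : m ≤ l
  · have hlt : Set.Ici l ⊆ Set.Ioi m :=
      Set.Ici_subset_Ioi.2 (hml.lt_of_ne (ne_of_mem_of_not_mem hl hm).symm)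
    exact hP.mem_homThrough hlt (.std l le_rfl) g
  · rw [hP.hom_eq_zero_of_not_le hml g]
    exact zero_mem _

variable {M' : Type} [AddCommGroup M'] [Module A M'] {l : Λ} {ι : M' →ₗ[A] M} {π : M →ₗ[A] Δ l}

lemma exists_add_of_mem_homThrough (h : Function.Exact ι π) (hι : Function.Injective ι)
    {c : P l →ₗ[A] M} (hc : π ∘ₗ c = epi l) {f : Q →ₗ[A] M} (hf : f ∈ homThrough A P T Q M) :
    ∃ f' ∈ homThrough A P T Q M', ∃ d : Q →ₗ[A] P l, ι ∘ₗ f' + c ∘ₗ d = f := by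
  have := hP.proj
  induction hf using homThrough_induction with
  | comp μ hμ F k =>
    obtain ⟨d, hd⟩ := Module.projective_lifting_property (epi l) (π ∘ₗ F) (hP.surj l)
    obtain ⟨F', hF'⟩ := exists_factor_of_exact h hι (f := F - c ∘ₗ d)
      (by rw [LinearMap.comp_sub, ← LinearMap.comp_assoc, hc, hd, sub_self])
    refine ⟨F' ∘ₗ k, comp_mem_homThrough hμ F' k, d ∘ₗ k, ?_⟩
    rw [← LinearMap.comp_assoc, hF', LinearMap.sub_comp, LinearMap.comp_assoc, sub_add_cancel]
  | zero => exact ⟨0, zero_mem _, 0, by simp⟩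
  | add f g _ _ ihf ihg =>
    obtain ⟨f', hf', d, rfl⟩ := ihf
    obtain ⟨g', hg', e, rfl⟩ := ihg
    exact ⟨f' + g', add_mem hf' hg', d + e, by simp only [LinearMap.comp_add]; abel⟩

lemma exists_eq_comp_of_mem_homThrough (hT : IsUpperSet T) (hl : l ∉ T)
    (h : Function.Exact ι π) (hι : Function.Injective ι) {f : Q →ₗ[A] M}
    (hf : f ∈ homThrough A P T Q M) : ∃ f' ∈ homThrough A P T Q M', ι ∘ₗ f' = f := by
  induction hf using homThrough_induction with
  | comp μ hμ F k =>
    have hF : π ∘ₗ F = 0 := hP.hom_eq_zero_of_not_le (fun hμl => hl (hT hμl hμ)) _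
    obtain ⟨F', rfl⟩ := exists_factor_of_exact h hι hF
    exact ⟨F' ∘ₗ k, comp_mem_homThrough hμ F' k, rfl⟩
  | zero => exact ⟨0, zero_mem _, LinearMap.comp_zero ι⟩
  | add f g _ _ ihf ihg =>
    obtain ⟨f', hf', rfl⟩ := ihf
    obtain ⟨g', hg', rfl⟩ := ihg
    exact ⟨f' + g', add_mem hf' hg', LinearMap.comp_add f' g' ι⟩

lemma homPure_std_of_notMem (hT : IsUpperSet T) (hl : l ∉ T) : HomPure A P T Q (Δ l) := by
  intro M' M _ _ _ _ ι π h hι _ f hf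
  obtain ⟨f', hf', hf'f⟩ := hP.exists_eq_comp_of_mem_homThrough hT hl h hι hf
  rwa [← (LinearMap.cancel_left hι).1 hf'f]

lemma homPure_std_of_mem [Module.Projective A Q] (hT : IsUpperSet T) (hl : l ∈ T) :
    HomPure A P T Q (Δ l) := by
  intro M' M _ _ _ _ ι π h hι hπ f hf
  have := hP.proj
  let K := LinearMap.ker (epi l)
  have hK : Function.Exact K.subtype (epi l) := LinearMap.exact_subtype_ker_map _
  obtain ⟨c, hc⟩ := Module.projective_lifting_property π (epi l) hπ
  obtain ⟨f', hf', d, hd⟩ := hP.exists_add_of_mem_homThrough h hι hc hf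
  have hd₀ : epi l ∘ₗ d = 0 := by
    rw [← hc, LinearMap.comp_assoc, eq_sub_of_add_eq' hd, ← LinearMap.comp_sub,
      ← LinearMap.comp_assoc, h.linearMap_comp_eq_zero, LinearMap.zero_comp]
  obtain ⟨d', rfl⟩ := exists_factor_of_exact hK K.subtype_injective hd₀
  obtain ⟨c', hc'⟩ := exists_factor_of_exact h hι (f := c ∘ₗ K.subtype)
    (by rw [← LinearMap.comp_assoc, hc, hK.linearMap_comp_eq_zero])
  have hf_eq : f = f' + c' ∘ₗ d' := by
    refine (LinearMap.cancel_left hι).1 ?_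
    rw [LinearMap.comp_add, ← LinearMap.comp_assoc, hc', LinearMap.comp_assoc, hd]
  have hT' : Set.Ioi l ⊆ T := fun μ hμ => hT (le_of_lt hμ) hl
  rw [hf_eq]
  exact add_mem hf' (homThrough_comp_mem_left c' (hP.mem_homThrough hT' (hP.ker l) d'))

lemma homPure [Module R M] [IsScalarTower R A M] [Module.Projective A Q] (hT : IsUpperSet T)
    (hM : StdClosure R A Δ S M) : HomPure A P T Q M := by
  induction hM with
  | zero M => exact .of_subsingleton
  | std l =>
    by_cases hlT : l ∈ T
    · exact hP.homPure_std_of_mem hT hlT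
    · exact hP.homPure_std_of_notMem hT hlT
  | retract X Y s r hrs _ ih => exact ih.of_retract hrs
  | ext M' M X ι π hι hπ h _ _ ih' ih => exact .of_exact h hι hπ ih' ih

end IsStdCover

end IsStdCover

section FiniteProjective

lemma exists_dual_basis (A Q : Type*) [Ring A] [AddCommGroup Q] [Module A Q] [Module.Finite A Q]
    [Module.Projective A Q] :
    ∃ (n : ℕ) (k : Fin n → Q →ₗ[A] A) (q : Fin n → Q), ∀ x, ∑ i, k i x • q i = x := by
  obtain ⟨n, r, s, -, -, hrs⟩ := Module.Finite.exists_comp_eq_id_of_projective A Q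
  refine ⟨n, fun i => LinearMap.proj i ∘ₗ s, fun i => r (Pi.single i 1), fun x => ?_⟩
  calc ∑ i, s x i • r (Pi.single i 1) = r (∑ i, s x i • Pi.single i 1) := by
        simp only [map_sum, map_smul]
    _ = r (s x) := by rw [← pi_eq_sum_univ']
    _ = x := LinearMap.congr_fun hrs x

section DualBasis

variable {A Q : Type*} [Ring A] [AddCommGroup Q] [Module A Q] {n : ℕ} {k : Fin n → Q →ₗ[A] A}
  {q : Fin n → Q} (hkq : ∀ x, ∑ i, k i x • q i = x)
include hkq

lemma eq_sum_toSpanSingleton_comp {M : Type*} [AddCommGroup M] [Module A M] (g : Q →ₗ[A] M) :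
    g = ∑ i, LinearMap.toSpanSingleton A M (g (q i)) ∘ₗ k i := by
  ext x
  conv_lhs => rw [← hkq x, map_sum]
  simp

lemma eq_sum_op_smul (f : Q →ₗ[A] A) : f = ∑ i, MulOpposite.op (f (q i)) • k i := by
  ext x
  conv_lhs => rw [← hkq x, map_sum]
  simp

end DualBasis

variable {A S X Y Z : Type*} [Ring A] [Ring S]

lemma projective_of_exact [AddCommGroup X] [Module A X] [AddCommGroup Y] [Module A Y]
    [AddCommGroup Z] [Module A Z] {f : X →ₗ[A] Y} {g : Y →ₗ[A] Z} (h : Function.Exact f g)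
    (hf : Function.Injective f) (hg : Function.Surjective g)
    [Module.Projective A X] [Module.Projective A Z] : Module.Projective A Y := by
  obtain ⟨s, hs⟩ := Module.projective_lifting_property g .id hg
  exact .of_equiv (h.splitSurjectiveEquiv hf ⟨s, hs⟩).1.symm

variable {Q M : Type*} [AddCommGroup Q] [Module A Q]
    [Module.Finite A Q] [Module.Projective A Q] [AddCommGroup M] [Module A M] [Module S M]
    [SMulCommClass A S M]

variable (A S Q M) in
lemma exists_hom_retract_pi : ∃ (n : ℕ) (s : (Q →ₗ[A] M) →ₗ[S] (Fin n → M))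
    (r : (Fin n → M) →ₗ[S] (Q →ₗ[A] M)), r ∘ₗ s = LinearMap.id := by
  obtain ⟨n, r, s, -, -, hrs⟩ := Module.Finite.exists_comp_eq_id_of_projective A Q
  let e : (Fin n → M) ≃ₗ[S] ((Fin n → A) →ₗ[A] M) := (Pi.basisFun A (Fin n)).constr S
  refine ⟨n, e.symm ∘ₗ LinearMap.lcomp S M r, LinearMap.lcomp S M s ∘ₗ e, ?_⟩
  ext f x
  simp [show r (s x) = x from LinearMap.congr_fun hrs x]

variable (A S Q M) in
lemma finite_hom [Module.Finite S M] : Module.Finite S (Q →ₗ[A] M) := by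
  obtain ⟨n, s, r, hrs⟩ := exists_hom_retract_pi A S Q M
  exact .of_surjective r (LinearMap.surjective_of_comp_eq_id s r hrs)

variable (A S Q M) in
lemma projective_hom [Module.Projective S M] : Module.Projective S (Q →ₗ[A] M) := by
  obtain ⟨n, s, r, hrs⟩ := exists_hom_retract_pi A S Q M
  have : Module.Projective S (Fin n → M) :=
    .of_equiv (DFinsupp.linearEquivFunOnFintype (R := S) (M := fun _ : Fin n => M))
  exact .of_split s r hrs

end FiniteProjective

section StdMult

/-- The multiplicity module `G_m(M)`: for `M` filtered by standard modules, its rank is the number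
of factors `Δ(m)`. -/
abbrev StdMult (A : Type*) [Ring A] {Λ : Type*} [Preorder Λ] (P : Λ → Type*)
    [∀ l, AddCommGroup (P l)] [∀ l, Module A (P l)] (S : Type*) [Ring S] (m : Λ) (M : Type*)
    [AddCommGroup M] [Module A M] [Module S M] [SMulCommClass A S M] : Type _ :=
  HomQuot A P S (Set.Ioi m) (P m) M

lemma HomQuot.map_injective {A : Type} [Ring A] {Λ : Type} {P : Λ → Type}
    [∀ l, AddCommGroup (P l)] [∀ l, Module A (P l)] {S : Type*} [Ring S] {T : Set Λ}
    {Q M' M X : Type} [AddCommGroup Q] [Module A Q]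
    [AddCommGroup M'] [Module A M'] [Module S M'] [SMulCommClass A S M']
    [AddCommGroup M] [Module A M] [Module S M] [SMulCommClass A S M]
    [LinearMap.CompatibleSMul M' M S A] [AddCommGroup X] [Module A X]
    {ι : M' →ₗ[A] M} {π : M →ₗ[A] X} (hX : HomPure A P T Q X) (h : Function.Exact ι π)
    (hι : Function.Injective ι) (hπ : Function.Surjective π) :
    Function.Injective (HomQuot.map P S T Q ι) := by
  rw [injective_iff_map_eq_zero]
  intro y hy
  obtain ⟨f, rfl⟩ := Submodule.Quotient.mk_surjective _ y
  rw [HomQuot.map_mk, HomQuot.mk_eq_zero] at hy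
  exact HomQuot.mk_eq_zero.2 (hX M' M ι π h hι hπ f hy)

variable {R : Type} [CommRing R] {A : Type} [Ring A] [Algebra R A] {Λ : Type} [PartialOrder Λ]
  {Δ : Λ → Type} [∀ l, AddCommGroup (Δ l)] [∀ l, Module R (Δ l)]
  [∀ l, Module A (Δ l)] [∀ l, IsScalarTower R A (Δ l)]
  {P : Λ → Type} [∀ l, AddCommGroup (P l)] [∀ l, Module R (P l)]
  [∀ l, Module A (P l)] [∀ l, IsScalarTower R A (P l)]
  {epi : ∀ l, P l →ₗ[A] Δ l} {S : Set Λ} {M : Type} [AddCommGroup M] [Module R M] [Module A M]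
  [IsScalarTower R A M]

namespace IsStdCover

variable (hP : IsStdCover R epi)
include hP

lemma subsingleton_stdMult {m : Λ} (hm : m ∉ S) (hM : StdClosure R A Δ S M) :
    Subsingleton (StdMult A P R m M) :=
  HomQuot.subsingleton_iff.2 (hP.mem_homThrough_Ioi hm hM)

/-- The identification of `Hom(Δ(m), M)` with `G_m(M)` when no `Δ(l)` with `m < l` maps to `M`. -/
noncomputable def homEquivStdMult {m : Λ} (hM : ∀ l ∈ Set.Ioi m, ∀ f : Δ l →ₗ[A] M, f = 0) :
    (Δ m →ₗ[A] M) ≃ₗ[R] StdMult A P R m M :=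
  LinearEquiv.ofBijective
    ((homThroughSubmodule A P R (Set.Ioi m) (P m) M).mkQ ∘ₗ LinearMap.lcomp R M (epi m)) <| by
    have hbot : homThrough A P (Set.Ioi m) (P m) M = ⊥ := homThrough_eq_bot fun μ hμ =>
      (hP.cover μ).hom_eq_zero fun l hl => hM l (hμ.trans_le hl)
    constructor
    · rw [injective_iff_map_eq_zero]
      intro f hf
      have hf' : f ∘ₗ epi m ∈ homThrough A P (Set.Ioi m) (P m) M := HomQuot.mk_eq_zero.1 hf
      rw [hbot, AddSubgroup.mem_bot] at hf'
      exact (LinearMap.cancel_right (hP.surj m)).1 hf'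
    · intro y
      obtain ⟨f, rfl⟩ := Submodule.Quotient.mk_surjective _ y
      obtain ⟨g, rfl⟩ := hP.exists_comp_epi_eq hM f
      exact ⟨g, rfl⟩

/-- `G_m(Δ(m))` is free of rank one on the class of the epimorphism `P(m) → Δ(m)`. -/
noncomputable def stdMultStdEquiv (m : Λ) : R ≃ₗ[R] StdMult A P R m (Δ m) :=
  LinearEquiv.ofBijective (Algebra.linearMap R (Module.End A (Δ m))) (hP.endo m) ≪≫ₗ
    hP.homEquivStdMult hP.hom_std_eq_zero_of_lt

lemma stdMultStdEquiv_apply (m : Λ) (r : R) :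
    hP.stdMultStdEquiv m r = r • Submodule.Quotient.mk (epi m) :=
  rfl

lemma stdMult_map_injective {m : Λ} {M' X : Type} [AddCommGroup M'] [Module R M'] [Module A M']
    [IsScalarTower R A M'] [AddCommGroup X] [Module R X] [Module A X] [IsScalarTower R A X]
    {ι : M' →ₗ[A] M} {π : M →ₗ[A] X} (h : Function.Exact ι π)
    (hι : Function.Injective ι) (hπ : Function.Surjective π) (hX : StdClosure R A Δ S X) :
    Function.Injective (HomQuot.map P R (Set.Ioi m) (P m) ι) :=
  have := hP.proj
  HomQuot.map_injective (hP.homPure (isUpperSet_Ioi m) hX) h hι hπ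

lemma finite_stdMult (m : Λ) (hM : StdClosure R A Δ S M) :
    Module.Finite R (StdMult A P R m M) := by
  have := hP.proj
  induction hM with
  | zero M =>
    have := hP.subsingleton_stdMult (m := m) (Set.notMem_empty m) (.zero M)
    infer_instance
  | std l =>
    obtain rfl | hlm := eq_or_ne m l
    · exact .equiv (hP.stdMultStdEquiv m)
    · have := hP.subsingleton_stdMult (S := {l}) hlm (.std l rfl)
      infer_instance
  | retract X Y s r hrs _ ih =>
    exact .of_surjective _ (LinearMap.surjective_of_comp_eq_id _ _
      (HomQuot.map_comp_map_eq_id hrs))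
  | ext M' M X ι π hι hπ h _ _ ih' ih =>
    exact .of_exact (HomQuot.map_exact h hι hπ) (HomQuot.map_surjective hπ)

lemma projective_stdMult (m : Λ) (hM : StdClosure R A Δ S M) :
    Module.Projective R (StdMult A P R m M) := by
  have := hP.proj
  induction hM with
  | zero M =>
    have := hP.subsingleton_stdMult (m := m) (Set.notMem_empty m) (.zero M)
    infer_instance
  | std l =>
    obtain rfl | hlm := eq_or_ne m l
    · exact .of_equiv (hP.stdMultStdEquiv m)
    · have := hP.subsingleton_stdMult (S := {l}) hlm (.std l rfl)
      infer_instance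
  | retract X Y s r hrs _ ih => exact .of_split _ _ (HomQuot.map_comp_map_eq_id hrs)
  | ext M' M X ι π hι hπ h _ hX ih' ih =>
    exact projective_of_exact (HomQuot.map_exact h hι hπ) (hP.stdMult_map_injective h hι hπ hX)
      (HomQuot.map_surjective hπ)

end IsStdCover

end StdMult

section TensorComp

namespace HomQuot

variable {R : Type*} [CommRing R] {A : Type*} [Ring A] [Algebra R A] {Λ : Type*} {P : Λ → Type*}
  [∀ l, AddCommGroup (P l)] [∀ l, Module A (P l)] (S : Type*) [Ring S] [Algebra R S]
  {T T' : Set Λ} (hT : T ⊆ T') {Q N U : Type*} [AddCommGroup Q] [Module A Q] [AddCommGroup N]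
  [Module R N] [Module A N] [IsScalarTower R A N] [AddCommGroup U] [Module R U]
  (s : U →ₗ[R] (Q →ₗ[A] N)) (M : Type*) [AddCommGroup M] [Module R M] [Module A M]
  [IsScalarTower R A M]

/-- The map `[f] ⊗ u ↦ [f ∘ s(u)]` by which the subquotients of the filtrations of `Hom(Q, M)`
are compared with multiplicity modules. -/
noncomputable def tensorComp [Module S M] [IsScalarTower R S M] [SMulCommClass A S M] :
    HomQuot A P S T N M ⊗[R] U →ₗ[S] HomQuot A P S T' Q M :=
  TensorProduct.AlgebraTensorModule.lift <| Submodule.liftQ _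
    { toFun f := (homThroughSubmodule A P S T' Q M).mkQ.restrictScalars R ∘ₗ
        LinearMap.compRight R f ∘ₗ s
      map_add' _ _ := rfl
      map_smul' _ _ := rfl }
    fun _ hf => LinearMap.ext fun u =>
      mk_eq_zero.2 (homThrough_mono hT (homThrough_comp_mem_right hf (s u)))

@[simp]
lemma tensorComp_mk_tmul [Module S M] [IsScalarTower R S M] [SMulCommClass A S M]
    (f : N →ₗ[A] M) (u : U) : tensorComp (P := P) S hT s M (Submodule.Quotient.mk f ⊗ₜ u) =
      Submodule.Quotient.mk (f ∘ₗ s u) :=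
  rfl

variable {M} in
lemma map_comp_tensorComp {M' : Type*} [AddCommGroup M'] [Module R M'] [Module A M']
    [IsScalarTower R A M'] (g : M →ₗ[A] M') :
    map P R T' Q g ∘ₗ tensorComp R hT s M =
      tensorComp R hT s M' ∘ₗ (map P R T N g).rTensor U :=
  TensorProduct.ext (by ext; rfl)

variable (R A P T Q) in
/-- `HomQuot` for the regular module does not depend on the ring of scalars. -/
noncomputable def opEquiv : HomQuot A P R T Q A ≃ₗ[R] HomQuot A P Aᵐᵒᵖ T Q A :=
  Submodule.Quotient.restrictScalarsEquiv R (homThroughSubmodule A P Aᵐᵒᵖ T Q A)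

lemma tensorComp_op_injective
    (h : Function.Injective (tensorComp (P := P) R hT s A)) :
    Function.Injective (tensorComp (P := P) Aᵐᵒᵖ hT s A) := by
  let e := (opEquiv R A P T N).rTensor U
  have hcomm : (tensorComp (P := P) Aᵐᵒᵖ hT s A).restrictScalars R ∘ₗ e.toLinearMap =
      (opEquiv R A P T' Q).toLinearMap ∘ₗ tensorComp R hT s A :=
    TensorProduct.ext (by ext; rfl)
  have hcomm' : tensorComp Aᵐᵒᵖ hT s A ∘ e = opEquiv R A P T' Q ∘ tensorComp R hT s A :=
    congrArg DFunLike.coe hcomm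
  refine Function.Injective.of_comp_right (g := e) ?_ e.surjective
  rw [hcomm']
  exact (opEquiv R A P T' Q).injective.comp h

end HomQuot

namespace IsStdCover

variable {R : Type} [CommRing R] {A : Type} [Ring A] [Algebra R A] {Λ : Type} [PartialOrder Λ]
  {Δ : Λ → Type} [∀ l, AddCommGroup (Δ l)] [∀ l, Module R (Δ l)]
  [∀ l, Module A (Δ l)] [∀ l, IsScalarTower R A (Δ l)]
  {P : Λ → Type} [∀ l, AddCommGroup (P l)] [∀ l, Module R (P l)]
  [∀ l, Module A (P l)] [∀ l, IsScalarTower R A (P l)]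
  {epi : ∀ l, P l →ₗ[A] Δ l} (hP : IsStdCover R epi)
include hP

lemma exists_linear_lift (Q : Type) [AddCommGroup Q] [Module A Q] [Module.Finite A Q]
    [Module.Projective A Q] (m : Λ) [Module.Projective R (Δ m)] :
    ∃ s : (Q →ₗ[A] Δ m) →ₗ[R] (Q →ₗ[A] P m), ∀ u, epi m ∘ₗ s u = u := by
  have := projective_hom A R Q (Δ m)
  obtain ⟨s, hs⟩ := Module.projective_lifting_property (LinearMap.compRight R (epi m))
    (LinearMap.id : (Q →ₗ[A] Δ m) →ₗ[R] _)
    fun f => Module.projective_lifting_property (epi m) f (hP.surj m)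
  exact ⟨s, fun u => LinearMap.congr_fun hs u⟩

variable {T : Set Λ} {m : Λ} (hmT : Set.Ioi m ⊆ T) {Q : Type} [AddCommGroup Q] [Module A Q]
  {s : (Q →ₗ[A] Δ m) →ₗ[R] (Q →ₗ[A] P m)} (hs : ∀ u, epi m ∘ₗ s u = u)
include hs

lemma tensorComp_std_injective (hT : IsUpperSet T) (hm : m ∉ T) :
    Function.Injective (HomQuot.tensorComp (P := P) R hmT s (Δ m)) := by
  have hbot : homThrough A P T Q (Δ m) = ⊥ :=
    hP.homThrough_std_eq_bot fun μ hμ hμm => hm (hT hμm hμ)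
  let e := (TensorProduct.lid R (Q →ₗ[A] Δ m)).symm ≪≫ₗ (hP.stdMultStdEquiv m).rTensor _
  have he (u : Q →ₗ[A] Δ m) : e u = Submodule.Quotient.mk (epi m) ⊗ₜ u := by
    simp [e, stdMultStdEquiv_apply]
  refine Function.Injective.of_comp_right (g := e) (fun u v huv => ?_) e.surjective
  rw [Function.comp_apply, Function.comp_apply, he, he, HomQuot.tensorComp_mk_tmul,
    HomQuot.tensorComp_mk_tmul, hs, hs, HomQuot.mk_eq_mk, hbot, AddSubgroup.mem_bot] at huv
  exact sub_eq_zero.1 huv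

lemma tensorComp_injective [Module.Projective A Q] (hT : IsUpperSet T) (hm : m ∉ T) {S : Set Λ}
    {M : Type} [AddCommGroup M] [Module R M] [Module A M] [IsScalarTower R A M]
    (hM : StdClosure R A Δ S M) : Function.Injective (HomQuot.tensorComp (P := P) R hmT s M) := by
  have := hP.proj
  induction hM with
  | zero M =>
    have := hP.subsingleton_stdMult (m := m) (Set.notMem_empty m) (.zero M)
    exact Function.injective_of_subsingleton _
  | std l =>
    obtain rfl | hml := eq_or_ne m l
    · exact hP.tensorComp_std_injective hmT hs hT hm
    · have := hP.subsingleton_stdMult (S := {l}) hml (.std l rfl)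
      exact Function.injective_of_subsingleton _
  | retract X Y a b hba _ ih =>
    have hinj : Function.Injective ((HomQuot.map P R (Set.Ioi m) (P m) a).rTensor (Q →ₗ[A] Δ m)) :=
      Function.LeftInverse.injective (g := (HomQuot.map P R _ _ b).rTensor _) fun z => by
        rw [← LinearMap.comp_apply, ← LinearMap.rTensor_comp, HomQuot.map_comp_map_eq_id hba,
          LinearMap.rTensor_id, LinearMap.id_apply]
    refine Function.Injective.of_comp (f := HomQuot.map P R T Q a) ?_
    rw [← LinearMap.coe_comp, HomQuot.map_comp_tensorComp]
    exact ih.comp hinj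
  | ext M' M X ι π hι hπ h _ hX ih' ih =>
    rw [injective_iff_map_eq_zero]
    intro z hz
    have hπz : (HomQuot.map P R _ _ π).rTensor _ z = 0 := (map_eq_zero_iff _ ih).1 <| by
      rw [← LinearMap.comp_apply, ← HomQuot.map_comp_tensorComp, LinearMap.comp_apply, hz, map_zero]
    obtain ⟨w, rfl⟩ := (rTensor_exact (Q →ₗ[A] Δ m) (HomQuot.map_exact h hι hπ)
      (HomQuot.map_surjective hπ) z).1 hπz
    rw [← LinearMap.comp_apply, ← HomQuot.map_comp_tensorComp, LinearMap.comp_apply,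
      map_eq_zero_iff _ (HomQuot.map_injective (hP.homPure hT hX) h hι hπ),
      map_eq_zero_iff _ ih'] at hz
    rw [hz, map_zero]

lemma range_tensorComp (S : Type*) [Ring S] [Algebra R S] [Module.Projective A Q] (M : Type)
    [AddCommGroup M] [Module R M] [Module A M] [IsScalarTower R A M] [Module S M]
    [IsScalarTower R S M] [SMulCommClass A S M] :
    LinearMap.range (HomQuot.tensorComp (P := P) S hmT s M) =
      (homThroughSubmodule A P S (insert m T) Q M).map (homThroughSubmodule A P S T Q M).mkQ := by
  apply le_antisymm
  · rintro _ ⟨z, rfl⟩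
    induction z with
    | zero =>
      rw [map_zero]
      exact zero_mem _
    | add x y hx hy =>
      rw [map_add]
      exact add_mem hx hy
    | tmul x u =>
      obtain ⟨f, rfl⟩ := Submodule.Quotient.mk_surjective _ x
      exact ⟨f ∘ₗ s u, comp_mem_homThrough (Set.mem_insert m T) f (s u), rfl⟩
  · rintro _ ⟨g, hg, rfl⟩
    induction hg using homThrough_induction with
    | comp μ hμ F k =>
      obtain rfl | hμ := hμ
      · refine ⟨Submodule.Quotient.mk F ⊗ₜ (epi μ ∘ₗ k), ?_⟩
        rw [HomQuot.tensorComp_mk_tmul, Submodule.mkQ_apply, HomQuot.mk_eq_mk, ← LinearMap.comp_sub]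
        exact homThrough_comp_mem_left F
          (homThrough_mono hmT (hP.sub_mem_homThrough_of_comp_eq (hs _)))
      · rw [Submodule.mkQ_apply, HomQuot.mk_eq_zero.2 (comp_mem_homThrough hμ F k)]
        exact zero_mem _
    | zero =>
      rw [map_zero]
      exact zero_mem _
    | add f g _ _ hf hg =>
      rw [map_add]
      exact add_mem hf hg

end IsStdCover

end TensorComp

section InFilt

variable {R : Type} [CommRing R] {A : Type} [Ring A] [Algebra R A] {Λ : Type}
  {Δ : Λ → Type} [∀ l, AddCommGroup (Δ l)] [∀ l, Module R (Δ l)]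
  [∀ l, Module A (Δ l)] [∀ l, IsScalarTower R A (Δ l)] {S : Set Λ}
  {M' M : Type} [AddCommGroup M'] [Module A M'] [AddCommGroup M] [Module A M]

lemma InFilt.of_subsingleton [Subsingleton M] : InFilt R A Λ Δ S M :=
  ⟨inferInstance, 0, fun _ => ⊥, rfl, Subsingleton.elim _ _, monotone_const, fun i => i.elim0⟩

/-- An injective linear map identifies each subquotient of its source with the subquotient of the
images. -/
noncomputable def subquotientMapEquiv {ι : M' →ₗ[A] M} (hι : Function.Injective ι)
    (W₀ W₁ : Submodule A M') :
    (W₁.map ι ⧸ (W₀.map ι).comap (W₁.map ι).subtype) ≃ₗ[A] W₁ ⧸ W₀.comap W₁.subtype :=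
  (Submodule.Quotient.equiv _ _ (Submodule.equivMapOfInjective ι hι W₁) <| by
    ext x
    obtain ⟨y, rfl⟩ := (Submodule.equivMapOfInjective ι hι W₁).surjective x
    rw [Submodule.map_equiv_eq_comap_symm]
    simp [hι.eq_iff]).symm

lemma finite_tensorProduct (M U : Type*) [AddCommGroup M] [Module R M] [Module A M]
    [IsScalarTower R A M] [Module.Finite A M] [AddCommGroup U] [Module R U] [Module.Finite R U] :
    Module.Finite A (M ⊗[R] U) := by
  obtain ⟨n, r, hr⟩ := Module.Finite.exists_fin' R U
  let g := TensorProduct.AlgebraTensorModule.lTensor A M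
    (r ∘ₗ (Finsupp.linearEquivFunOnFinite R R (Fin n)).toLinearMap)
  have hg : Function.Surjective g :=
    LinearMap.lTensor_surjective M (hr.comp (LinearEquiv.surjective _))
  exact .of_surjective (g ∘ₗ (TensorProduct.finsuppScalarRight R A M (Fin n)).symm.toLinearMap)
    (hg.comp (LinearEquiv.surjective _))

lemma InFilt.of_exact {l : Λ} (hl : l ∈ S) [Module.Finite A (Δ l)] {U : Type} [AddCommGroup U]
    [Module R U] [Module.Finite R U] [Module.Projective R U] {ι : M' →ₗ[A] M}
    {π : M →ₗ[A] Δ l ⊗[R] U} (h : Function.Exact ι π) (hι : Function.Injective ι)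
    (hπ : Function.Surjective π) (hM' : InFilt R A Λ Δ S M') : InFilt R A Λ Δ S M := by
  obtain ⟨_, n, c, hc_bot, hc_top, hc_mono, hc⟩ := hM'
  let c' : Fin (n + 2) → Submodule A M := Fin.snoc (fun i => (c i).map ι) ⊤
  have hc'_last : c' (Fin.last n).succ = ⊤ := Fin.snoc_last _ _
  have hc'_castSucc (i : Fin (n + 1)) : c' i.castSucc = (c i).map ι := Fin.snoc_castSucc _ _ _
  have hc'_succ (i : Fin n) : c' i.castSucc.succ = (c i.succ).map ι := hc'_castSucc i.succ
  have := finite_tensorProduct (R := R) (A := A) (Δ l) U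
  refine ⟨.of_exact h hπ, n + 1, c', ?_, hc'_last, Fin.monotone_iff_le_succ.2 fun i => ?_,
    fun i => ?_⟩
  · exact (hc'_castSucc 0).trans (by rw [hc_bot, Submodule.map_bot])
  · induction i using Fin.lastCases with
    | last => exact hc'_last ▸ le_top
    | cast i =>
      rw [hc'_castSucc, hc'_succ]
      exact Submodule.map_mono (hc_mono i.castSucc_lt_succ.le)
  · induction i using Fin.lastCases with
    | last =>
      rw [hc'_last, hc'_castSucc, hc_top, Submodule.map_top, ← h.linearMap_ker_eq]
      refine ⟨⟨l, hl, .of R U, ‹_›, ‹_›, ?_⟩⟩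
      exact Submodule.Quotient.equiv _ _ Submodule.topEquiv
        (Submodule.map_comap_subtype _ _ |>.trans (top_inf_eq _)) ≪≫ₗ
          π.quotKerEquivOfSurjective hπ
    | cast i =>
      rw [hc'_castSucc, hc'_succ]
      obtain ⟨⟨k, hk, V, hV, hV', e⟩⟩ := hc i
      exact ⟨⟨k, hk, V, hV, hV', subquotientMapEquiv hι _ _ ≪≫ₗ e⟩⟩

end InFilt

lemma upperSet_induction_insert {α : Type*} [PartialOrder α] [Finite α] {motive : Set α → Prop}
    (empty : motive ∅)
    (insert : ∀ (a : α) (T : Set α), IsUpperSet T → a ∉ T → Set.Ioi a ⊆ T → motive T →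
      motive (insert a T))
    {T : Set α} (hT : IsUpperSet T) : motive T := by
  induction T using (wellFounded_lt (α := Set α)).induction with
  | _ T ih =>
    obtain rfl | hne := T.eq_empty_or_nonempty
    · exact empty
    obtain ⟨a, ha⟩ := T.toFinite.exists_minimal hne
    have hT' : IsUpperSet (T \ {a}) := hT.erase fun b hb hba => ha.eq_of_le hb hba
    rw [← Set.insert_sdiff_self_of_mem ha.prop]
    exact insert a _ hT' (fun h => h.2 rfl) (fun b hab => ⟨hT (le_of_lt hab) ha.prop, hab.ne'⟩)
      (ih _ (Set.sdiff_singleton_ssubset.2 ha.prop) hT')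

section HomThroughFilt

lemma exists_exact_inclusion_of_range_eq_map {B V X : Type*} [Ring B] [AddCommGroup V] [Module B V]
    [AddCommGroup X] [Module B X] {W₀ W₁ : Submodule B V} (hW : W₀ ≤ W₁) {g : X →ₗ[B] V ⧸ W₀}
    (hg : Function.Injective g) (hrange : LinearMap.range g = W₁.map W₀.mkQ) :
    ∃ π : W₁ →ₗ[B] X, Function.Exact (Submodule.inclusion hW) π ∧ Function.Surjective π := by
  let q : W₁ →ₗ[B] LinearMap.range g := (W₀.mkQ ∘ₗ W₁.subtype).codRestrict _ fun x =>
    hrange ▸ Submodule.mem_map_of_mem x.2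
  have hq_surj : Function.Surjective q := by
    rintro ⟨y, hy⟩
    obtain ⟨x, hx, rfl⟩ := hrange ▸ hy
    exact ⟨⟨x, hx⟩, rfl⟩
  let e := LinearEquiv.ofInjective g hg
  refine ⟨e.symm.toLinearMap ∘ₗ q, fun x => ?_, e.symm.surjective.comp hq_surj⟩
  have hq : q x = 0 ↔ x.1 ∈ W₀ := by
    rw [← Submodule.Quotient.mk_eq_zero, Subtype.ext_iff]
    rfl
  rw [← LinearMap.coe_range, SetLike.mem_coe, Submodule.range_inclusion, LinearMap.comp_apply,
    LinearEquiv.coe_coe, LinearEquiv.map_eq_zero_iff, hq, Submodule.mem_comap,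
    Submodule.subtype_apply]

variable {R : Type} [CommRing R] {A : Type} [Ring A] [Algebra R A] {Λ : Type} [PartialOrder Λ]
  {Δ : Λ → Type} [∀ l, AddCommGroup (Δ l)] [∀ l, Module R (Δ l)]
  [∀ l, Module A (Δ l)] [∀ l, IsScalarTower R A (Δ l)]
  {P : Λ → Type} [∀ l, AddCommGroup (P l)] [∀ l, Module R (P l)]
  [∀ l, Module A (P l)] [∀ l, IsScalarTower R A (P l)]
  {epi : ∀ l, P l →ₗ[A] Δ l}

namespace IsStdCover

variable (hP : IsStdCover R epi)
include hP

lemma finite_stdMult_op (m : Λ) : Module.Finite Aᵐᵒᵖ (StdMult A P Aᵐᵒᵖ m A) :=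
  have := hP.finite_stdMult m hP.reg
  have : Module.Finite R (StdMult A P Aᵐᵒᵖ m A) :=
    .equiv (HomQuot.opEquiv R A P (Set.Ioi m) (P m))
  .of_restrictScalars_finite R _ _

lemma inFilt_homThrough [Finite Λ] [∀ l, Module.Finite R (Δ l)] [∀ l, Module.Projective R (Δ l)]
    (Q : Type) [AddCommGroup Q] [Module A Q] [Module.Finite A Q] [Module.Projective A Q]
    {S T : Set Λ} (hT : IsUpperSet T) (hTS : T ⊆ S) :
    InFilt R Aᵐᵒᵖ Λ (fun l => StdMult A P Aᵐᵒᵖ l A) S (homThroughSubmodule A P Aᵐᵒᵖ T Q A) := by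
  refine upperSet_induction_insert (motive := fun T => T ⊆ S → InFilt R Aᵐᵒᵖ Λ
    (fun l => StdMult A P Aᵐᵒᵖ l A) S (homThroughSubmodule A P Aᵐᵒᵖ T Q A)) ?_ ?_ hT hTS
  · intro _
    have : Subsingleton (homThroughSubmodule A P Aᵐᵒᵖ ∅ Q A) :=
      subsingleton_of_forall_eq 0 fun f => Subtype.ext <|
        (homThrough_eq_bot (T := ∅) fun _ h => h.elim).le f.2
    exact .of_subsingleton
  · intro m T hT hm hmT ih hTS
    have := hP.finite_stdMult_op m
    have := finite_hom A R Q (Δ m)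
    have := projective_hom A R Q (Δ m)
    obtain ⟨s, hs⟩ := hP.exists_linear_lift Q m
    have hinj : Function.Injective (HomQuot.tensorComp (P := P) Aᵐᵒᵖ hmT s A) :=
      HomQuot.tensorComp_op_injective hmT s (hP.tensorComp_injective hmT hs hT hm hP.reg)
    obtain ⟨π, hex, hπ⟩ := exists_exact_inclusion_of_range_eq_map
      (homThrough_mono (Set.subset_insert m T)) hinj (hP.range_tensorComp hmT hs Aᵐᵒᵖ A)
    exact .of_exact (hTS (Set.mem_insert m T)) hex (Submodule.inclusion_injective _) hπ
      (ih ((Set.subset_insert m T).trans hTS))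

end IsStdCover

end HomThroughFilt

section Op

/-- The right regular `A`-module is the left regular module of the opposite algebra. -/
def opRegularEquiv (A : Type*) [Ring A] : A ≃ₗ[Aᵐᵒᵖ] Aᵐᵒᵖ where
  __ := MulOpposite.opAddEquiv
  map_smul' _ _ := rfl

instance finite_op_self (A : Type*) [Ring A] : Module.Finite Aᵐᵒᵖ A :=
  .equiv (opRegularEquiv A).symm

instance projective_op_self (A : Type*) [Ring A] : Module.Projective Aᵐᵒᵖ A :=
  .of_equiv (opRegularEquiv A).symm

lemma exists_comp_eq_of_linear_op {A Q Q' : Type*} [Ring A] [AddCommGroup Q] [Module A Q]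
    [Module.Finite A Q] [Module.Projective A Q] [AddCommGroup Q'] [Module A Q']
    (Φ : (Q →ₗ[A] A) →ₗ[Aᵐᵒᵖ] (Q' →ₗ[A] A)) : ∃ g : Q' →ₗ[A] Q, ∀ f, f ∘ₗ g = Φ f := by
  obtain ⟨n, k, q, hkq⟩ := exists_dual_basis A Q
  refine ⟨∑ i, (Φ (k i)).smulRight (q i), fun f => ?_⟩
  ext y
  conv_rhs => rw [eq_sum_op_smul hkq f, map_sum]
  simp

variable {R : Type} [CommRing R] {A : Type} [Ring A] [Algebra R A] {Λ : Type} [PartialOrder Λ]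
  {Δ : Λ → Type} [∀ l, AddCommGroup (Δ l)] [∀ l, Module R (Δ l)]
  [∀ l, Module A (Δ l)] [∀ l, IsScalarTower R A (Δ l)]
  {P : Λ → Type} [∀ l, AddCommGroup (P l)] [∀ l, Module R (P l)]
  [∀ l, Module A (P l)] [∀ l, IsScalarTower R A (P l)]
  {epi : ∀ l, P l →ₗ[A] Δ l}

namespace IsStdCover

variable (hP : IsStdCover R epi)
include hP

lemma exists_stdMult_op_hom_eq {l m : Λ}
    (φ : StdMult A P Aᵐᵒᵖ l A →ₗ[Aᵐᵒᵖ] StdMult A P Aᵐᵒᵖ m A) :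
    ∃ g : P m →ₗ[A] P l, ∀ f : P l →ₗ[A] A,
      φ (Submodule.Quotient.mk f) = Submodule.Quotient.mk (f ∘ₗ g) := by
  have := hP.proj
  have := hP.fin
  have := projective_hom A Aᵐᵒᵖ (P l) A
  obtain ⟨Φ, hΦ⟩ := Module.projective_lifting_property
    (homThroughSubmodule A P Aᵐᵒᵖ (Set.Ioi m) (P m) A).mkQ (φ ∘ₗ Submodule.mkQ _)
    (Submodule.mkQ_surjective _)
  obtain ⟨g, hg⟩ := exists_comp_eq_of_linear_op Φ
  exact ⟨g, fun f => hg f ▸ (LinearMap.congr_fun hΦ f).symm⟩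

lemma stdMult_op_hom_le {l m : Λ} (φ : StdMult A P Aᵐᵒᵖ l A →ₗ[Aᵐᵒᵖ] StdMult A P Aᵐᵒᵖ m A)
    (hφ : φ ≠ 0) : l ≤ m := by
  by_contra hlm
  obtain ⟨g, hg⟩ := hP.exists_stdMult_op_hom_eq φ
  refine hφ (LinearMap.ext fun x => ?_)
  obtain ⟨f, rfl⟩ := Submodule.Quotient.mk_surjective _ x
  rw [hg, LinearMap.zero_apply, HomQuot.mk_eq_zero]
  exact homThrough_comp_mem_left f (hP.mem_homThrough_Ioi hlm (hP.cover l) g)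

lemma stdMult_op_algebraMap_injective (m : Λ) :
    Function.Injective (algebraMap R (Module.End Aᵐᵒᵖ (StdMult A P Aᵐᵒᵖ m A))) := by
  have := hP.proj
  have := hP.fin
  rw [injective_iff_map_eq_zero]
  intro r hr
  obtain ⟨n, k, q, hkq⟩ := exists_dual_basis A (P m)
  have hmem : r • (LinearMap.id : P m →ₗ[A] P m) ∈ homThrough A P (Set.Ioi m) (P m) (P m) := by
    have hid : r • LinearMap.id =
        ∑ i, LinearMap.toSpanSingleton A (P m) (q i) ∘ₗ (r • k i) := by
      ext x
      conv_lhs => rw [LinearMap.smul_apply, LinearMap.id_apply, ← hkq x]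
      simp [Finset.smul_sum]
    rw [hid]
    exact sum_mem fun i _ => homThrough_comp_mem_left _
      (HomQuot.mk_eq_zero (S := Aᵐᵒᵖ).1 (LinearMap.congr_fun hr (Submodule.Quotient.mk (k i))))
  refine (hP.stdMultStdEquiv m).map_eq_zero_iff.1 ?_
  rw [stdMultStdEquiv_apply, ← Submodule.Quotient.mk_smul, HomQuot.mk_eq_zero]
  convert homThrough_comp_mem_left (epi m) hmem using 1
  ext x
  simp

lemma stdMult_op_algebraMap_surjective (m : Λ) :
    Function.Surjective (algebraMap R (Module.End Aᵐᵒᵖ (StdMult A P Aᵐᵒᵖ m A))) := by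
  have := hP.proj
  intro φ
  obtain ⟨g, hg⟩ := hP.exists_stdMult_op_hom_eq φ
  obtain ⟨d, hd⟩ := hP.exists_comp_epi_eq hP.hom_std_eq_zero_of_lt (epi m ∘ₗ g)
  obtain ⟨r, rfl⟩ := (hP.endo m).surjective d
  refine ⟨r, LinearMap.ext fun x => ?_⟩
  obtain ⟨f, rfl⟩ := Submodule.Quotient.mk_surjective _ x
  have hrg : r • LinearMap.id - g ∈ homThrough A P (Set.Ioi m) (P m) (P m) :=
    hP.sub_mem_homThrough_of_comp_eq (hd ▸ by ext; simp)
  rw [hg, Module.algebraMap_end_apply, ← Submodule.Quotient.mk_smul, HomQuot.mk_eq_mk]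
  convert homThrough_comp_mem_left f hrg using 1
  ext x
  simp

end IsStdCover

end Op

section InAdd

variable {A T X Y : Type} [Ring A] [AddCommGroup T] [Module A T] [AddCommGroup X] [Module A X]
  [AddCommGroup Y] [Module A Y]

lemma InAdd.of_retract (h : InAdd A T Y) {s : X →ₗ[A] Y} {r : Y →ₗ[A] X}
    (hrs : r ∘ₗ s = LinearMap.id) : InAdd A T X := by
  obtain ⟨n, i, p, hpi⟩ := h
  refine ⟨n, i ∘ₗ s, r ∘ₗ p, ?_⟩
  rw [LinearMap.comp_assoc, ← LinearMap.comp_assoc s, hpi, LinearMap.id_comp, hrs]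

lemma InAdd.of_linearEquiv (h : InAdd A T Y) (e : X ≃ₗ[A] Y) : InAdd A T X :=
  h.of_retract e.symm_comp

lemma InAdd.pi (h : InAdd A T X) (N : ℕ) : InAdd A T (Fin N → X) := by
  obtain ⟨n, i, p, hpi⟩ := h
  let e : (Fin N → Fin n → T) ≃ₗ[A] (Fin (N * n) → T) :=
    (LinearEquiv.curry A T (Fin N) (Fin n)).symm ≪≫ₗ
      LinearEquiv.funCongrLeft A T finProdFinEquiv.symm
  refine ⟨N * n, e.toLinearMap ∘ₗ i.compLeft (Fin N), p.compLeft (Fin N) ∘ₗ e.symm.toLinearMap,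
    LinearMap.ext fun x => ?_⟩
  have hx : p.compLeft (Fin N) (i.compLeft (Fin N) x) = x :=
    funext fun j => LinearMap.congr_fun hpi (x j)
  simpa using hx

lemma InAdd.of_projective (h : InAdd A T A) [Module.Finite A X] [Module.Projective A X] :
    InAdd A T X := by
  obtain ⟨n, f, g, -, -, hfg⟩ := Module.Finite.exists_comp_eq_id_of_projective A X
  exact (h.pi n).of_retract hfg

lemma InAdd.hom {Λ : Type} [Finite Λ] {P : Λ → Type} [∀ l, AddCommGroup (P l)]
    [∀ l, Module A (P l)] {S M : Type} [Ring S] [AddCommGroup M] [Module A M] [Module S M]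
    [SMulCommClass A S M] (h : InAdd A (∀ l, P l) X) :
    InAdd S (∀ l, P l →ₗ[A] M) (X →ₗ[A] M) := by
  classical
  cases nonempty_fintype Λ
  obtain ⟨n, i, p, hpi⟩ := h
  let e : (Fin n → ∀ l, P l →ₗ[A] M) ≃ₗ[S] ((Fin n → ∀ l, P l) →ₗ[A] M) :=
    LinearEquiv.piCongrRight (fun _ => LinearMap.lsum A P S) ≪≫ₗ
      LinearMap.lsum A (fun _ => ∀ l, P l) S
  refine ⟨n, e.symm.toLinearMap ∘ₗ LinearMap.lcomp S M p, LinearMap.lcomp S M i ∘ₗ e.toLinearMap,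
    LinearMap.ext fun f => ?_⟩
  have hf : LinearMap.lcomp S M i (LinearMap.lcomp S M p f) = f :=
    LinearMap.ext fun x => congrArg f (LinearMap.congr_fun hpi x)
  simpa using hf

end InAdd

section SplitQH

variable {R : Type} [CommRing R] {A : Type} [Ring A] [Algebra R A] {Λ : Type}
  {Δ Δ' : Λ → Type} [∀ l, AddCommGroup (Δ l)] [∀ l, Module R (Δ l)]
  [∀ l, Module A (Δ l)] [∀ l, IsScalarTower R A (Δ l)]
  [∀ l, AddCommGroup (Δ' l)] [∀ l, Module R (Δ' l)]
  [∀ l, Module A (Δ' l)] [∀ l, IsScalarTower R A (Δ' l)]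

lemma InFilt.congr (e : ∀ l, Δ l ≃ₗ[A] Δ' l) {S : Set Λ} {M : Type} [AddCommGroup M]
    [Module A M] (h : InFilt R A Λ Δ S M) : InFilt R A Λ Δ' S M := by
  obtain ⟨hM, n, c, hc_bot, hc_top, hc_mono, hc⟩ := h
  refine ⟨hM, n, c, hc_bot, hc_top, hc_mono, fun i => ?_⟩
  obtain ⟨⟨l, hl, U, hU, hU', f⟩⟩ := hc i
  exact ⟨⟨l, hl, U, hU, hU', f ≪≫ₗ TensorProduct.AlgebraTensorModule.congr (e l) (.refl R U)⟩⟩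

variable [PartialOrder Λ]

/-- Transport of a split quasi-hereditary structure along isomorphisms of the standard modules. -/
noncomputable def SplitQH.congr (h : SplitQH R A Λ Δ) (e : ∀ l, Δ l ≃ₗ[A] Δ' l) :
    SplitQH R A Λ Δ' where
  __ := h
  deltaFinA l := have := h.deltaFinA l; .equiv (e l)
  deltaFinR l := have := h.deltaFinR l; .equiv ((e l).restrictScalars R)
  deltaProjR l := have := h.deltaProjR l; .of_equiv ((e l).restrictScalars R)
  hom_le l m := by
    rintro ⟨f, hf⟩
    refine h.hom_le l m ⟨(e m).symm.toLinearMap ∘ₗ f ∘ₗ (e l).toLinearMap, fun h₀ => hf ?_⟩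
    ext x
    simpa using LinearMap.congr_fun h₀ ((e l).symm x)
  endIso l := (h.endIso l).map fun f => ((e l).symm.conjAlgEquiv R).trans f
  epi l := (e l).toLinearMap ∘ₗ h.epi l
  epi_surj l := (e l).surjective.comp (h.epi_surj l)
  ker_filt l := by
    rw [LinearEquiv.ker_comp]
    exact (h.ker_filt l).congr e

/-- Transport of a split quasi-hereditary structure on `A^op` to dual modules `D N(l)`. The modules
`N(l)` are variables here: for a concrete dual `N(l)`, instance search would find `dualModule'` for
the `R`-action on `D N(l)`. -/
noncomputable def SplitQH.congrDual {E N : Λ → Type} [∀ l, AddCommGroup (E l)]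
    [∀ l, Module R (E l)] [∀ l, Module Aᵐᵒᵖ (E l)] [∀ l, IsScalarTower R Aᵐᵒᵖ (E l)]
    [∀ l, AddCommGroup (N l)] [∀ l, Module R (N l)] [∀ l, Module A (N l)]
    [∀ l, IsScalarTower R A (N l)] (h : SplitQH R Aᵐᵒᵖ Λ E)
    (e : ∀ l, E l ≃ₗ[Aᵐᵒᵖ] (N l →ₗ[R] R)) : SplitQH R Aᵐᵒᵖ Λ (fun l => N l →ₗ[R] R) :=
  h.congr e

lemma SplitQH.isStdCover [Finite Λ] (h : SplitQH R A Λ Δ) [∀ l, Module R (h.P l)]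
    [∀ l, IsScalarTower R A (h.P l)] : IsStdCover R (P := fun l => h.P l) h.epi where
  proj := h.P_proj
  fin := h.P_fin
  surj := h.epi_surj
  hom_le l m f hf := h.hom_le l m ⟨f, hf⟩
  endo l := by
    obtain ⟨e⟩ := h.endIso l
    refine Function.Bijective.of_comp_iff' e.bijective _ |>.1 ?_
    convert Function.bijective_id
    ext r
    simp
  ker l := (h.ker_filt l).stdClosure
  reg := by
    obtain ⟨n, i, p, hpi⟩ := h.add_gen (ModuleCat.of A A) inferInstance inferInstance
    refine .retract A (Fin n → ∀ l, (h.P l : Type)) i p hpi (.pi _ fun _ => .pi _ fun l => ?_)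
    exact .of_surjective (h.epi l) (h.epi_surj l)
      ((h.ker_filt l).stdClosure.mono (Set.subset_univ _)) (.std l (Set.mem_univ _))

variable {P : Λ → Type} [∀ l, AddCommGroup (P l)] [∀ l, Module R (P l)] [∀ l, Module A (P l)]
  [∀ l, IsScalarTower R A (P l)] {epi : ∀ l, P l →ₗ[A] Δ l}

/-- The opposite of a split quasi-hereditary algebra is split quasi-hereditary, with standard
modules `G_l(A)`. -/
noncomputable def IsStdCover.splitQHOp [Finite Λ] [Module.Finite R A] [Module.Projective R A]
    [∀ l, Module.Finite R (Δ l)] [∀ l, Module.Projective R (Δ l)] (hP : IsStdCover R epi)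
    (hA : InAdd A (∀ l, P l) A) : SplitQH R Aᵐᵒᵖ Λ (fun l => StdMult A P Aᵐᵒᵖ l A) where
  algFin := .equiv (MulOpposite.opLinearEquiv R)
  algProj := .of_equiv (MulOpposite.opLinearEquiv R : A ≃ₗ[R] Aᵐᵒᵖ)
  deltaFinA := hP.finite_stdMult_op
  deltaFinR l := have := hP.finite_stdMult l hP.reg; .equiv (HomQuot.opEquiv R A P _ _)
  deltaProjR l := have := hP.projective_stdMult l hP.reg; .of_equiv (HomQuot.opEquiv R A P _ _)
  hom_le _ _ := fun ⟨f, hf⟩ => hP.stdMult_op_hom_le f hf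
  endIso l := ⟨(AlgEquiv.ofBijective (Algebra.ofId R _)
    ⟨hP.stdMult_op_algebraMap_injective l, hP.stdMult_op_algebraMap_surjective l⟩).symm⟩
  P l := ModuleCat.of Aᵐᵒᵖ (P l →ₗ[A] A)
  P_proj l := have := hP.proj; have := hP.fin; projective_hom A Aᵐᵒᵖ (P l) A
  P_fin l := have := hP.proj; have := hP.fin; finite_hom A Aᵐᵒᵖ (P l) A
  epi l := (homThroughSubmodule A P Aᵐᵒᵖ (Set.Ioi l) (P l) A).mkQ
  epi_surj _ := Submodule.mkQ_surjective _
  ker_filt l := by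
    have := hP.proj
    have := hP.fin
    rw [Submodule.ker_mkQ]
    exact hP.inFilt_homThrough (P l) (isUpperSet_Ioi l) subset_rfl
  add_gen _ _ _ := (hA.hom.of_linearEquiv
    ((opRegularEquiv A).symm ≪≫ₗ (LinearMap.ringLmapEquivSelf A Aᵐᵒᵖ A).symm)).of_projective

/-- A right module, finitely generated and projective over `R`, is its own double dual. -/
noncomputable def evalEquivOp (E : Type) [AddCommGroup E] [Module R E] [Module Aᵐᵒᵖ E]
    [IsScalarTower R Aᵐᵒᵖ E] [Module.Finite R E] [Module.Projective R E] :
    E ≃ₗ[Aᵐᵒᵖ] ((E →ₗ[R] R) →ₗ[R] R) where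
  __ := Module.evalEquiv R E
  map_smul' _ _ := rfl

end SplitQH

section Costandard

variable {R : Type} [CommRing R] {A : Type} [Ring A] [Algebra R A] {Λ : Type} [PartialOrder Λ]
  {Δ : Λ → Type} [∀ l, AddCommGroup (Δ l)] [∀ l, Module R (Δ l)]
  [∀ l, Module A (Δ l)] [∀ l, IsScalarTower R A (Δ l)]
  {P : Λ → Type} [∀ l, AddCommGroup (P l)] [∀ l, Module A (P l)]
  {epi : ∀ l, P l →ₗ[A] Δ l} {m : Λ}
  {M M' : Type} [AddCommGroup M] [Module R M] [Module A M] [IsScalarTower R A M]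
  [AddCommGroup M'] [Module R M'] [Module A M'] [IsScalarTower R A M']

variable (R A P) in
/-- The costandard module `∇(m)`, the `R`-dual of the right module `G_m(A)`. -/
abbrev Costd (m : Λ) : Type := StdMult A P Aᵐᵒᵖ m A →ₗ[R] R

namespace Costd

/-- The homomorphism `M → ∇(m)` adjoint to a linear form on `G_m(M)`, in view of
`G_m(M) = G_m(A) ⊗_A M`. -/
noncomputable def lift (α : StdMult A P R m M →ₗ[R] R) : M →ₗ[A] Costd R A P m where
  toFun x := α ∘ₗ HomQuot.map P R _ (P m) (LinearMap.toSpanSingleton A M x) ∘ₗ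
    (HomQuot.opEquiv R A P _ (P m)).symm.toLinearMap
  map_add' x y := by
    refine LinearMap.ext fun z => ?_
    obtain ⟨f, rfl⟩ := Submodule.Quotient.mk_surjective _ z
    change α (Submodule.Quotient.mk _) = α (Submodule.Quotient.mk _) + α (Submodule.Quotient.mk _)
    rw [← map_add, ← Submodule.Quotient.mk_add]
    congr 2
    exact LinearMap.ext fun p => smul_add (f p) x y
  map_smul' a x := by
    refine LinearMap.ext fun z => ?_
    obtain ⟨f, rfl⟩ := Submodule.Quotient.mk_surjective _ z
    change α (Submodule.Quotient.mk _) = α (Submodule.Quotient.mk _)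
    congr 2
    exact LinearMap.ext fun p => (mul_smul (f p) a x).symm

lemma lift_apply_mk (α : StdMult A P R m M →ₗ[R] R) (x : M) (f : P m →ₗ[A] A) :
    lift α x (Submodule.Quotient.mk f) =
      α (Submodule.Quotient.mk (LinearMap.toSpanSingleton A M x ∘ₗ f)) :=
  rfl

lemma lift_comp (α : StdMult A P R m M →ₗ[R] R) (g : M' →ₗ[A] M) :
    lift α ∘ₗ g = lift (α ∘ₗ HomQuot.map P R _ (P m) g) := by
  refine LinearMap.ext fun x => LinearMap.ext fun z => ?_
  obtain ⟨f, rfl⟩ := Submodule.Quotient.mk_surjective _ z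
  rw [LinearMap.comp_apply, lift_apply_mk, lift_apply_mk, LinearMap.comp_apply, HomQuot.map_mk]
  congr 2
  ext
  simp

lemma lift_injective [Module.Finite A (P m)] [Module.Projective A (P m)] :
    Function.Injective (lift (R := R) (A := A) (P := P) (m := m) (M := M)) := by
  obtain ⟨n, k, q, hkq⟩ := exists_dual_basis A (P m)
  intro α β hαβ
  refine LinearMap.ext fun z => ?_
  obtain ⟨g, rfl⟩ := Submodule.Quotient.mk_surjective _ z
  rw [eq_sum_toSpanSingleton_comp hkq g, ← Submodule.mkQ_apply, map_sum, map_sum, map_sum]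
  exact Finset.sum_congr rfl fun i _ =>
    LinearMap.congr_fun (LinearMap.congr_fun hαβ (g (q i))) (Submodule.Quotient.mk (k i))

lemma exists_form_apply_toSpanSingleton_comp [Module.Finite A (P m)] [Module.Projective A (P m)]
    (φ : M →ₗ[A] Costd R A P m) : ∃ β : (P m →ₗ[A] M) →ₗ[R] R, ∀ x (f : P m →ₗ[A] A),
      β (LinearMap.toSpanSingleton A M x ∘ₗ f) = φ x (Submodule.Quotient.mk f) := by
  obtain ⟨n, k, q, hkq⟩ := exists_dual_basis A (P m)
  refine ⟨∑ i, (φ.restrictScalars R).flip (Submodule.Quotient.mk (k i)) ∘ₗ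
    LinearMap.applyₗ' R (q i), fun x f => ?_⟩
  conv_rhs => rw [eq_sum_op_smul hkq f, ← Submodule.mkQ_apply, map_sum, map_sum]
  simp [← dualModule'_smul_apply]

lemma lift_surjective [∀ l, Module.Finite A (P l)] [∀ l, Module.Projective A (P l)] :
    Function.Surjective (lift (R := R) (A := A) (P := P) (m := m) (M := M)) := by
  intro φ
  obtain ⟨β, hβ⟩ := exists_form_apply_toSpanSingleton_comp φ
  have hβ₀ : homThroughSubmodule A P R (Set.Ioi m) (P m) M ≤ LinearMap.ker β := by
    intro g hg
    induction hg using homThrough_induction with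
    | comp μ hμ F h =>
      obtain ⟨n, k, q, hkq⟩ := exists_dual_basis A (P μ)
      have hFh : F ∘ₗ h = ∑ i, LinearMap.toSpanSingleton A M (F (q i)) ∘ₗ k i ∘ₗ h := by
        ext y
        simpa using LinearMap.congr_fun (eq_sum_toSpanSingleton_comp hkq F) (h y)
      rw [LinearMap.mem_ker, hFh, map_sum]
      refine Finset.sum_eq_zero fun i _ => ?_
      rw [hβ, HomQuot.mk_eq_zero.2 (comp_mem_homThrough hμ (k i) h), map_zero]
    | zero => exact zero_mem _
    | add f g _ _ hf hg => exact add_mem hf hg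
  refine ⟨Submodule.liftQ _ β hβ₀, LinearMap.ext fun x => LinearMap.ext fun z => ?_⟩
  obtain ⟨f, rfl⟩ := Submodule.Quotient.mk_surjective _ z
  exact hβ x f

variable (R A P) in
/-- The adjunction `D G_m(M) ≃ Hom(M, ∇(m))`. -/
noncomputable def liftEquiv [∀ l, Module.Finite A (P l)] [∀ l, Module.Projective A (P l)] (m : Λ)
    (M : Type) [AddCommGroup M] [Module R M] [Module A M] [IsScalarTower R A M] :
    (StdMult A P R m M →ₗ[R] R) ≃ₗ[R] (M →ₗ[A] Costd R A P m) :=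
  LinearEquiv.ofBijective
    { toFun := lift
      map_add' α β := by
        refine LinearMap.ext fun x => LinearMap.ext fun z => ?_
        obtain ⟨f, rfl⟩ := Submodule.Quotient.mk_surjective _ z
        simp only [LinearMap.add_apply, lift_apply_mk]
      map_smul' r α := by
        refine LinearMap.ext fun x => LinearMap.ext fun z => ?_
        obtain ⟨f, rfl⟩ := Submodule.Quotient.mk_surjective _ z
        simp only [LinearMap.smul_apply, lift_apply_mk, RingHom.id_apply] }
    ⟨lift_injective, lift_surjective⟩

end Costd

namespace IsStdCover

variable [∀ l, Module R (P l)] [∀ l, IsScalarTower R A (P l)] (hP : IsStdCover R epi)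
include hP

/-- Evaluation at the generator `[epi m]` of `G_m(Δ(m))`. -/
noncomputable def dualStdMultStdEquiv (m : Λ) : (StdMult A P R m (Δ m) →ₗ[R] R) ≃ₗ[R] R :=
  LinearEquiv.congrLeft R R (hP.stdMultStdEquiv m).symm ≪≫ₗ LinearMap.ringLmapEquivSelf R R R

lemma dualStdMultStdEquiv_apply (m : Λ) (α : StdMult A P R m (Δ m) →ₗ[R] R) :
    hP.dualStdMultStdEquiv m α = α (Submodule.Quotient.mk (epi m)) :=
  congrArg α ((hP.stdMultStdEquiv_apply m 1).trans (one_smul R _))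

lemma nonempty_hom_costd (m : Λ) : Nonempty ((Δ m →ₗ[A] Costd R A P m) ≃ₗ[R] R) :=
  have := hP.proj
  have := hP.fin
  ⟨(Costd.liftEquiv R A P m (Δ m)).symm ≪≫ₗ hP.dualStdMultStdEquiv m⟩

lemma hom_costd_eq_zero {l m : Λ} (hlm : l ≠ m) (f : Δ l →ₗ[A] Costd R A P m) : f = 0 := by
  have := hP.proj
  have := hP.fin
  have := hP.subsingleton_stdMult (S := {l}) hlm.symm (.std l rfl)
  have := (Costd.liftEquiv R A P m (Δ l)).symm.toEquiv.subsingleton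
  exact Subsingleton.elim _ _

lemma extVanish_costd_one (l m : Λ) : extVanish A (Δ l) (Costd R A P m) 1 := by
  have := hP.proj
  have := hP.fin
  have hexact : Function.Exact (LinearMap.ker (epi l)).subtype (epi l) :=
    (epi l).exact_subtype_ker_map
  refine extVanish_one_of_forall_exists_extend hexact (Submodule.subtype_injective _) (hP.surj l)
    fun f => ?_
  obtain ⟨α, rfl⟩ := Costd.lift_surjective f
  have hstd : StdClosure R A Δ {l} (Δ l) := .std l rfl
  have := hP.projective_stdMult m hstd
  have hsurj := HomQuot.map_surjective (P := P) (S := R) (T := Set.Ioi m) (Q := P m) (hP.surj l)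
  obtain ⟨s, hs⟩ := Module.projective_lifting_property _ LinearMap.id hsurj
  obtain ⟨e, he, -⟩ := (HomQuot.map_exact hexact (Submodule.subtype_injective _)
    (hP.surj l)).splitSurjectiveEquiv
    (hP.stdMult_map_injective hexact (Submodule.subtype_injective _) (hP.surj l) hstd) ⟨s, hs⟩
  refine ⟨Costd.lift (α ∘ₗ LinearMap.fst R _ _ ∘ₗ e.toLinearMap), ?_⟩
  rw [Costd.lift_comp, he]
  congr 1
  ext
  simp

lemma extVanish_costd (l m : Λ) (i : ℕ) : extVanish A (Δ l) (Costd R A P m) (i + 1) := by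
  have := hP.proj
  induction i generalizing l with
  | zero => exact hP.extVanish_costd_one l m
  | succ i ih =>
    exact extVanish_add_two_of_exact_of_projective (epi l).exact_subtype_ker_map
      (Submodule.subtype_injective _) (hP.surj l) ((hP.ker l).extVanish fun l _ => ih l)

lemma bijective_lift_comp {m : Λ} (φ : StdMult A P R m M →ₗ[R] R)
    (hφ : Function.Bijective fun f : Δ m →ₗ[A] M => φ (Submodule.Quotient.mk (f ∘ₗ epi m))) :
    Function.Bijective fun f : Δ m →ₗ[A] M => Costd.lift φ ∘ₗ f := by
  have := hP.proj
  have := hP.fin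
  let E := (hP.dualStdMultStdEquiv m).symm ≪≫ₗ Costd.liftEquiv R A P m (Δ m)
  have hE (f : Δ m →ₗ[A] M) : Costd.lift φ ∘ₗ f = E (φ (Submodule.Quotient.mk (f ∘ₗ epi m))) := by
    rw [Costd.lift_comp]
    refine congrArg Costd.lift ((LinearEquiv.eq_symm_apply _).2 ?_)
    rw [dualStdMultStdEquiv_apply, LinearMap.comp_apply, HomQuot.map_mk]
  simp only [hE]
  exact E.bijective.comp hφ

theorem nonempty_equiv_costd {m : Λ} (hM : ∀ l, l ≠ m → ∀ f : Δ l →ₗ[A] M, f = 0)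
    (e : (Δ m →ₗ[A] M) ≃ₗ[R] R) (hM' : ∀ l, extVanish A (Δ l) M 1) :
    Nonempty (M ≃ₗ[A] Costd R A P m) := by
  let c := hP.homEquivStdMult (m := m) fun l hl => hM l (ne_of_gt hl)
  have hc (f : Δ m →ₗ[A] M) : (c.symm ≪≫ₗ e) (Submodule.Quotient.mk (f ∘ₗ epi m)) = e f :=
    congrArg e (c.symm_apply_apply f)
  refine ⟨.ofBijective (Costd.lift (c.symm ≪≫ₗ e).toLinearMap) <|
    hP.reg.bijective_of_bijective_comp _ (fun l _ => hM' l) fun l _ => ?_⟩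
  obtain rfl | hlm := eq_or_ne l m
  · exact hP.bijective_lift_comp _ ((funext hc : _ = ⇑e) ▸ e.bijective)
  · exact ⟨fun f g _ => (hM l hlm f).trans (hM l hlm g).symm,
      fun f => ⟨0, (hP.hom_costd_eq_zero hlm _).trans (hP.hom_costd_eq_zero hlm f).symm⟩⟩

end IsStdCover

end Costandard

theorem costandard_exists_unique_general
    (R : Type) [CommRing R] (A : Type) [Ring A] [Algebra R A]
    (Λ : Type) [Finite Λ] [PartialOrder Λ]
    (Δ : Λ → Type) [∀ l, AddCommGroup (Δ l)] [∀ l, Module R (Δ l)]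
    [∀ l, Module A (Δ l)] [∀ l, IsScalarTower R A (Δ l)] (h : SplitQH R A Λ Δ) :
    Nonempty (CostandardFamily R A Λ Δ) ∧
      ∀ (C₁ C₂ : CostandardFamily R A Λ Δ) (l : Λ), Nonempty (C₁.Nab l ≃ₗ[A] C₂.Nab l) := by
  let _ : ∀ l, Module R (h.P l) := fun l => Module.compHom _ (algebraMap R A)
  have _ : ∀ l, IsScalarTower R A (h.P l) := fun l => .of_algebraMap_smul fun _ _ => rfl
  have := h.algFin
  have := h.algProj
  have := h.deltaFinR
  have := h.deltaProjR
  have hP := h.isStdCover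
  let hop := hP.splitQHOp (h.add_gen (ModuleCat.of A A) inferInstance inferInstance)
  have := hop.deltaFinR
  have := hop.deltaProjR
  refine ⟨⟨⟨Costd R A fun l => h.P l, ⟨⟨hop.congrDual fun l => evalEquivOp _⟩,
    hP.nonempty_hom_costd, fun _ _ hlm => hP.hom_costd_eq_zero hlm, fun l m i hi => ?_⟩⟩⟩,
    fun C₁ C₂ l => ?_⟩
  · obtain ⟨i, rfl⟩ := Nat.exists_eq_succ_of_ne_zero hi.ne'
    exact hP.extVanish_costd l m i
  · have hcostd (C : CostandardFamily R A Λ Δ) :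
        Nonempty (C.Nab l ≃ₗ[A] Costd R A (fun l => h.P l) l) :=
      hP.nonempty_equiv_costd (fun k => C.cost.2.2.1 k l) (C.cost.2.1 l).some
        fun k => C.cost.2.2.2 k l 1 one_pos
    exact ⟨(hcostd C₁).some ≪≫ₗ (hcostd C₂).some.symm⟩

noncomputable section

/-- Existence and uniqueness (up to isomorphism) of the costandard modules of
a split quasi-hereditary algebra: there is a family `{∇(λ)}` such that `(A^op, {D∇(λ)})` is
split quasi-hereditary and `Ext^i_A(Δ(λ), ∇(β)) ≅ R` if `i = 0` and `λ = β`, and vanishes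
otherwise; and any two such families are pointwise isomorphic. -/
theorem costandard_exists_unique
    (R : Type) [CommRing R] [IsNoetherianRing R]
    (A : Type) [Ring A] [Algebra R A]
    (Λ : Type) [Fintype Λ] [PartialOrder Λ]
    (Δ : Λ → Type) [∀ l, AddCommGroup (Δ l)] [∀ l, Module R (Δ l)]
    [∀ l, Module A (Δ l)] [∀ l, IsScalarTower R A (Δ l)]
    (h : SplitQH R A Λ Δ) :
    Nonempty (CostandardFamily R A Λ Δ) ∧
    ∀ (C₁ C₂ : CostandardFamily R A Λ Δ) (l : Λ),
      Nonempty (C₁.Nab l ≃ₗ[A] C₂.Nab l) :=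
  costandard_exists_unique_general R A Λ Δ h

end
end

section
/- Let (A, {Δ(λ)}) be a split quasi-hereditary algebra over a commutative Noetherian ring R with costandard modules {∇(λ)}. Then the modules {DΔ(λ) : λ ∈ Λ} are costandard modules for the split quasi-hereditary algebra (A^op, {D∇(λ)}). -/
open scoped TensorProduct
open CategoryTheory

noncomputable section

/-!
Let `M` be an `R`-projective left `A`-module and `Z` an `R`-projective right `A`-module. Both
`Hom(Z, DM)` and `Hom(M, DZ)` consist of the balanced forms on `Z × M`. Dualising an exact sequence
`0 → K → P → M → 0` with `P` projective gives `0 → DM → DP → DK → 0`, in which `DP` is acyclic for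
`Hom(Z, -)` because `Hom(-, DP)` is `Hom(P, D(-))`. Shifting dimensions along both sequences,
`Ext^i(Z, DM) = 0` if and only if `Ext^i(M, DZ) = 0`, for `i > 0`. Taking `Z = D∇(μ)` and
`M = Δ(λ)`, the orthogonality relations for the duals become the given ones, since `∇(μ)` is its own
double dual; likewise `Δ ≅ DDΔ` carries the quasi-hereditary structure of `A` over to `(Aᵒᵖ)ᵒᵖ`.

That `∇(μ)`, which is `Hom(A, ∇(μ))`, is finitely generated projective over `R` follows from the
orthogonality: `Ext¹(-, ∇(μ))` vanishes on modules with a standard filtration, so `Hom(-, ∇(μ))` is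
glued along the filtration from finitely generated projective `R`-modules, and `A` is a direct
summand of such a module.
-/

section Ext

variable {C : Type*} [Category* C] [Abelian C] [HasExt C] {S : ShortComplex C} {X Y : C}

lemma subsingleton_ext_succ_iff_forall_exists_d_comp (P : ProjectiveResolution X) (n : ℕ) :
    Subsingleton (Abelian.Ext X Y (n + 1)) ↔
      ∀ f : P.complex.X (n + 1) ⟶ Y, P.complex.d (n + 2) (n + 1) ≫ f = 0 →
        ∃ g : P.complex.X n ⟶ Y, P.complex.d (n + 1) n ≫ g = f := by
  constructor
  · intro h f hf
    exact (P.extMk_eq_zero_iff f (n + 2) rfl hf n rfl).1 (Subsingleton.elim _ _)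
  · intro h
    refine subsingleton_of_forall_eq 0 fun α => ?_
    obtain ⟨f, hf, rfl⟩ := P.extMk_surjective α (n + 2) rfl
    exact (P.extMk_eq_zero_iff f (n + 2) rfl hf n rfl).2 (h f hf)

lemma subsingleton_ext_of_retract {Z : C} (r : Retract X Z) {n : ℕ}
    (h : Subsingleton (Abelian.Ext Z Y n)) : Subsingleton (Abelian.Ext X Y n) := by
  refine subsingleton_of_forall_eq 0 fun x => ?_
  calc x = (Abelian.Ext.mk₀ r.i).comp ((Abelian.Ext.mk₀ r.r).comp x (zero_add n))
        (zero_add n) := by simp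
    _ = 0 := by rw [Subsingleton.elim ((Abelian.Ext.mk₀ r.r).comp x _) 0, Abelian.Ext.comp_zero]

lemma exists_extension_of_subsingleton_ext (hS : S.ShortExact)
    (h₃ : Subsingleton (Abelian.Ext S.X₃ Y 1)) (f : S.X₁ ⟶ Y) : ∃ g : S.X₂ ⟶ Y, S.f ≫ g = f := by
  obtain ⟨x, hx⟩ := Abelian.Ext.contravariant_sequence_exact₁ hS Y (Abelian.Ext.mk₀ f)
    (add_zero 1) (Subsingleton.elim _ _)
  obtain ⟨g, rfl⟩ := (Abelian.Ext.mk₀_bijective S.X₂ Y).2 x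
  rw [Abelian.Ext.mk₀_comp_mk₀] at hx
  exact ⟨g, (Abelian.Ext.mk₀_bijective S.X₁ Y).1 hx⟩

lemma subsingleton_ext_one_iff_forall_exists_extension (hS : S.ShortExact)
    (h₂ : Subsingleton (Abelian.Ext S.X₂ Y 1)) :
    Subsingleton (Abelian.Ext S.X₃ Y 1) ↔ ∀ f : S.X₁ ⟶ Y, ∃ g : S.X₂ ⟶ Y, S.f ≫ g = f := by
  refine ⟨exists_extension_of_subsingleton_ext hS,
    fun h => subsingleton_of_forall_eq 0 fun x => ?_⟩
  obtain ⟨y, rfl⟩ := Abelian.Ext.contravariant_sequence_exact₃ hS Y x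
    (Subsingleton.elim _ _) (add_zero 1)
  obtain ⟨f, rfl⟩ := (Abelian.Ext.mk₀_bijective S.X₁ Y).2 y
  obtain ⟨g, rfl⟩ := h f
  rw [← Abelian.Ext.mk₀_comp_mk₀, hS.extClass_comp_assoc]

lemma exists_lift_of_subsingleton_ext (hS : S.ShortExact)
    (h₁ : Subsingleton (Abelian.Ext X S.X₁ 1)) (f : X ⟶ S.X₃) : ∃ g : X ⟶ S.X₂, g ≫ S.g = f := by
  obtain ⟨x, hx⟩ := Abelian.Ext.covariant_sequence_exact₃ X hS (Abelian.Ext.mk₀ f)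
    (zero_add 1) (Subsingleton.elim _ _)
  obtain ⟨g, rfl⟩ := (Abelian.Ext.mk₀_bijective X S.X₂).2 x
  rw [Abelian.Ext.mk₀_comp_mk₀] at hx
  exact ⟨g, (Abelian.Ext.mk₀_bijective X S.X₃).1 hx⟩

lemma subsingleton_ext_one_iff_forall_exists_lift (hS : S.ShortExact)
    (h₂ : Subsingleton (Abelian.Ext X S.X₂ 1)) :
    Subsingleton (Abelian.Ext X S.X₁ 1) ↔ ∀ f : X ⟶ S.X₃, ∃ g : X ⟶ S.X₂, g ≫ S.g = f := by
  refine ⟨exists_lift_of_subsingleton_ext hS, fun h => subsingleton_of_forall_eq 0 fun x => ?_⟩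
  obtain ⟨y, rfl⟩ := Abelian.Ext.covariant_sequence_exact₁ X hS x
    (Subsingleton.elim _ _) (zero_add 1)
  obtain ⟨f, rfl⟩ := (Abelian.Ext.mk₀_bijective X S.X₃).2 y
  obtain ⟨g, rfl⟩ := h f
  rw [← Abelian.Ext.mk₀_comp_mk₀, Abelian.Ext.comp_assoc_of_second_deg_zero, hS.comp_extClass,
    Abelian.Ext.comp_zero]

lemma subsingleton_ext_succ_iff_contravariant (hS : S.ShortExact) {n : ℕ}
    (h₂ : Subsingleton (Abelian.Ext S.X₂ Y n)) (h₂' : Subsingleton (Abelian.Ext S.X₂ Y (n + 1))) :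
    Subsingleton (Abelian.Ext S.X₃ Y (n + 1)) ↔ Subsingleton (Abelian.Ext S.X₁ Y n) := by
  refine ⟨fun h => subsingleton_of_forall_eq 0 fun x => ?_,
    fun h => subsingleton_of_forall_eq 0 fun x => ?_⟩
  · obtain ⟨y, rfl⟩ := Abelian.Ext.contravariant_sequence_exact₁ hS Y x (add_comm 1 n)
      (Subsingleton.elim _ _)
    rw [Subsingleton.elim y 0, Abelian.Ext.comp_zero]
  · obtain ⟨y, rfl⟩ := Abelian.Ext.contravariant_sequence_exact₃ hS Y x
      (Subsingleton.elim _ _) (add_comm 1 n)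
    rw [Subsingleton.elim y 0, Abelian.Ext.comp_zero]

lemma subsingleton_ext_succ_iff_covariant (hS : S.ShortExact) {n : ℕ}
    (h₂ : Subsingleton (Abelian.Ext X S.X₂ n)) (h₂' : Subsingleton (Abelian.Ext X S.X₂ (n + 1))) :
    Subsingleton (Abelian.Ext X S.X₁ (n + 1)) ↔ Subsingleton (Abelian.Ext X S.X₃ n) := by
  refine ⟨fun h => subsingleton_of_forall_eq 0 fun x => ?_,
    fun h => subsingleton_of_forall_eq 0 fun x => ?_⟩
  · obtain ⟨y, rfl⟩ := Abelian.Ext.covariant_sequence_exact₃ X hS x rfl (Subsingleton.elim _ _)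
    rw [Subsingleton.elim y 0, Abelian.Ext.zero_comp]
  · obtain ⟨y, rfl⟩ := Abelian.Ext.covariant_sequence_exact₁ X hS x (Subsingleton.elim _ _) rfl
    rw [Subsingleton.elim y 0, Abelian.Ext.zero_comp]

lemma subsingleton_ext_X₂ (hS : S.ShortExact) {n : ℕ}
    (h₁ : Subsingleton (Abelian.Ext S.X₁ Y n)) (h₃ : Subsingleton (Abelian.Ext S.X₃ Y n)) :
    Subsingleton (Abelian.Ext S.X₂ Y n) := by
  refine subsingleton_of_forall_eq 0 fun x => ?_
  obtain ⟨y, rfl⟩ := Abelian.Ext.contravariant_sequence_exact₂ hS Y x (Subsingleton.elim _ _)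
  rw [Subsingleton.elim y 0, Abelian.Ext.comp_zero]

end Ext

section ExtVanish

variable {A M N : Type} [Ring A] [AddCommGroup M] [Module A M] [AddCommGroup N] [Module A N]

lemma extVanish_succ_iff {n : ℕ} :
    extVanish A M N (n + 1) ↔
      Subsingleton (Abelian.Ext (ModuleCat.of A M) (ModuleCat.of A N) (n + 1)) := by
  let P := projectiveResolution (ModuleCat.of A M)
  rw [subsingleton_ext_succ_iff_forall_exists_d_comp P, extVanish,
    ← ModuleCat.isZero_iff_subsingleton, (P.isoExt (n + 1) _).isZero_iff,
    ← HomologicalComplex.exactAt_iff_isZero_homology,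
    HomologicalComplex.exactAt_iff' _ n (n + 1) (n + 2) (by simp) (by simp),
    ShortComplex.moduleCat_exact_iff]
  rfl

lemma extVanish_congr_right {N' : Type} [AddCommGroup N'] [Module A N'] (e : N ≃ₗ[A] N') {i : ℕ} :
    extVanish A M N i ↔ extVanish A M N' i :=
  (((Ext ℤ (ModuleCat A) i).obj _).mapIso
    e.toModuleIso).toLinearEquiv.toEquiv.subsingleton_congr

lemma subsingleton_ext_succ_of_projective [Module.Projective A M] (n : ℕ) :
    Subsingleton (Abelian.Ext (ModuleCat.of A M) (ModuleCat.of A N) (n + 1)) :=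
  have : Projective (ModuleCat.of A M) := (IsProjective.iff_projective M).1 inferInstance
  Abelian.Ext.subsingleton_of_projective _ _ n

end ExtVanish

section Splitting

variable {R : Type*} [CommRing R] {A : Type*} [Ring A] [Algebra R A]
  {L M N : Type*} [AddCommGroup L] [Module R L] [Module A L] [IsScalarTower R A L]
  [AddCommGroup M] [Module R M] [Module A M] [IsScalarTower R A M]
  [AddCommGroup N] [Module R N] [Module A N] [IsScalarTower R A N]
  {f : L →ₗ[A] M} {g : M →ₗ[A] N}

lemma exists_restrictScalars_retraction [Module.Projective R N] (hf : Function.Injective f)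
    (hg : Function.Surjective g) (hfg : Function.Exact f g) :
    ∃ r : M →ₗ[R] L, r ∘ₗ f.restrictScalars R = LinearMap.id := by
  have hfg' : Function.Exact (f.restrictScalars R) (g.restrictScalars R) := hfg
  exact ((hfg'.split_tfae hf hg).out 0 1).1
    (Module.projective_lifting_property (g.restrictScalars R) LinearMap.id hg)

lemma restrictScalars_lcomp_surjective [Module.Projective R N] (E : Type*) [AddCommGroup E]
    [Module R E] (hf : Function.Injective f) (hg : Function.Surjective g)
    (hfg : Function.Exact f g) :
    Function.Surjective (LinearMap.lcomp R E (f.restrictScalars R)) := fun φ => by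
  obtain ⟨r, hr⟩ := exists_restrictScalars_retraction (R := R) hf hg hfg
  exact ⟨φ ∘ₗ r, LinearMap.ext fun x => congrArg φ (LinearMap.congr_fun hr x)⟩

lemma projective_of_exact_left [Module.Projective R M] [Module.Projective R N]
    (hf : Function.Injective f) (hg : Function.Surjective g) (hfg : Function.Exact f g) :
    Module.Projective R L := by
  obtain ⟨r, hr⟩ := exists_restrictScalars_retraction (R := R) hf hg hfg
  exact .of_split _ r hr

lemma projective_of_exact_middle [Module.Projective R L] [Module.Projective R N]
    (hf : Function.Injective f) (hg : Function.Surjective g) (hfg : Function.Exact f g) :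
    Module.Projective R M := by
  have hfg' : Function.Exact (f.restrictScalars R) (g.restrictScalars R) := hfg
  obtain ⟨e, -⟩ := ((hfg'.split_tfae hf hg).out 0 2).1
    (Module.projective_lifting_property (g.restrictScalars R) LinearMap.id hg)
  exact .of_equiv e.symm

lemma projective_finsupp (ι : Type*) [Module.Projective R M] : Module.Projective R (ι →₀ M) := by
  classical exact .of_equiv (finsuppLequivDFinsupp R).symm

lemma projective_ker_linearCombination_id [Module.Projective R A] [Module.Projective R M] :
    Module.Projective R (LinearMap.ker (Finsupp.linearCombination A (id : M → M))) :=
  have : Module.Projective R (M →₀ A) := projective_finsupp M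
  projective_of_exact_left (Submodule.subtype_injective _)
    (Finsupp.linearCombination_id_surjective A M) (LinearMap.exact_subtype_ker_map _)

end Splitting

section Duality

variable (R : Type) [CommRing R] {A : Type} [Ring A] [Algebra R A]

section Transpose

variable {M N : Type} [AddCommGroup M] [Module R M] [Module A M] [IsScalarTower R A M]
  [AddCommGroup N] [Module R N] [Module A N] [IsScalarTower R A N]
  {Z W : Type} [AddCommGroup Z] [Module R Z] [Module Aᵐᵒᵖ Z] [IsScalarTower R Aᵐᵒᵖ Z]
  [AddCommGroup W] [Module R W] [Module Aᵐᵒᵖ W] [IsScalarTower R Aᵐᵒᵖ W]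

/-- The `R`-linear dual of a map of left `A`-modules, as a map of right `A`-modules. -/
def transpose (f : M →ₗ[A] N) : (N →ₗ[R] R) →ₗ[Aᵐᵒᵖ] (M →ₗ[R] R) where
  toFun φ := φ ∘ₗ f.restrictScalars R
  map_add' _ _ := rfl
  map_smul' a φ := by ext m; simp

/-- The `R`-linear dual of a map of right `A`-modules, as a map of left `A`-modules. -/
def transposeOp (f : Z →ₗ[Aᵐᵒᵖ] W) : (W →ₗ[R] R) →ₗ[A] (Z →ₗ[R] R) where
  toFun φ := φ ∘ₗ f.restrictScalars R
  map_add' _ _ := rfl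
  map_smul' a φ := by ext z; simp

variable (M Z) in
/-- The adjunction between the two dualities: maps from a right `A`-module `Z` to the dual of a
left `A`-module `M` correspond to maps from `M` to the dual of `Z`, both being the `A`-balanced
bilinear forms on `Z` and `M`. -/
def homDualFlip : (Z →ₗ[Aᵐᵒᵖ] (M →ₗ[R] R)) ≃ₗ[R] (M →ₗ[A] (Z →ₗ[R] R)) where
  toFun f :=
    { (f.restrictScalars R).flip with
      map_smul' := fun a m => by ext z; simp }
  invFun g :=
    { (g.restrictScalars R).flip with
      map_smul' := fun a z => by ext m; simp }
  map_add' _ _ := rfl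
  map_smul' _ _ := rfl

end Transpose

section ShortExact

variable {L M N : Type} [AddCommGroup L] [Module R L] [Module A L] [IsScalarTower R A L]
  [AddCommGroup M] [Module R M] [Module A M] [IsScalarTower R A M]
  [AddCommGroup N] [Module R N] [Module A N] [IsScalarTower R A N]
  {f : L →ₗ[A] M} {g : M →ₗ[A] N}

lemma transpose_exact (hg : Function.Surjective g) (hfg : Function.Exact f g) :
    Function.Exact (transpose R g) (transpose R f) :=
  LinearMap.exact_lcomp_of_exact_of_surjective R
    (f := f.restrictScalars R) (g := g.restrictScalars R) hfg hg

lemma shortExact_transpose [Module.Projective R N] (hf : Function.Injective f)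
    (hg : Function.Surjective g) (hfg : Function.Exact f g) :
    (ModuleCat.shortComplexOfCompEqZero (transpose R g) (transpose R f)
      (transpose_exact R hg hfg).linearMap_comp_eq_zero).ShortExact :=
  have hinj : Function.Injective (transpose R g) :=
    (show Function.Surjective (g.restrictScalars R) from hg).injective_linearMapComp_right
  ModuleCat.shortComplex_shortExact _ (transpose_exact R hg hfg) hinj
    (restrictScalars_lcomp_surjective R hf hg hfg)

end ShortExact

section Adjunction

variable {R}
variable {Z : Type} [AddCommGroup Z] [Module R Z] [Module Aᵐᵒᵖ Z] [IsScalarTower R Aᵐᵒᵖ Z]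
  [Module.Projective R Z]
  {K P M : Type} [AddCommGroup K] [Module R K] [Module A K] [IsScalarTower R A K]
  [AddCommGroup P] [Module R P] [Module A P] [IsScalarTower R A P] [Module.Projective A P]
  [AddCommGroup M] [Module R M] [Module A M] [IsScalarTower R A M] [Module.Projective R M]
  {i : K →ₗ[A] P} {q : P →ₗ[A] M}

lemma subsingleton_ext_one_dual_of_exact {L Q : Type}
    [AddCommGroup L] [Module R L] [Module Aᵐᵒᵖ L] [IsScalarTower R Aᵐᵒᵖ L]
    [AddCommGroup Q] [Module R Q] [Module Aᵐᵒᵖ Q] [IsScalarTower R Aᵐᵒᵖ Q]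
    [Module.Projective Aᵐᵒᵖ Q] {j : L →ₗ[Aᵐᵒᵖ] Q} {p : Q →ₗ[Aᵐᵒᵖ] Z}
    (hj : Function.Injective j) (hp : Function.Surjective p) (hjp : Function.Exact j p) :
    Subsingleton (Abelian.Ext (ModuleCat.of Aᵐᵒᵖ Z) (ModuleCat.of Aᵐᵒᵖ (P →ₗ[R] R)) 1) := by
  have hS := ModuleCat.shortComplex_shortExact
    (ModuleCat.shortComplexOfCompEqZero j p hjp.linearMap_comp_eq_zero) hjp hj hp
  have hj' : Function.Surjective (transposeOp R (A := A) j) :=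
    restrictScalars_lcomp_surjective R hj hp hjp
  refine (subsingleton_ext_one_iff_forall_exists_extension hS
    (subsingleton_ext_succ_of_projective 0)).2 fun f => ?_
  obtain ⟨g, hg⟩ := Module.projective_lifting_property _ (homDualFlip R P L f.hom) hj'
  exact ⟨ModuleCat.ofHom ((homDualFlip R P Q).symm g),
    ModuleCat.hom_ext ((homDualFlip R P L).injective hg)⟩

lemma subsingleton_ext_dual_of_projective [Module.Projective R A] (n : ℕ) :
    Subsingleton (Abelian.Ext (ModuleCat.of Aᵐᵒᵖ Z) (ModuleCat.of Aᵐᵒᵖ (P →ₗ[R] R)) (n + 1)) := by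
  induction n generalizing Z with
  | zero =>
    exact subsingleton_ext_one_dual_of_exact (Submodule.subtype_injective _)
      (Finsupp.linearCombination_id_surjective Aᵐᵒᵖ Z) (LinearMap.exact_subtype_ker_map _)
  | succ n ih =>
    have : Module.Projective R Aᵐᵒᵖ := .of_equiv (MulOpposite.opLinearEquiv R)
    have : Module.Projective R (LinearMap.ker (Finsupp.linearCombination Aᵐᵒᵖ (id : Z → Z))) :=
      projective_ker_linearCombination_id
    exact (subsingleton_ext_succ_iff_contravariant
      (LinearMap.shortExact_shortComplexKer (Finsupp.linearCombination_id_surjective Aᵐᵒᵖ Z))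
      (subsingleton_ext_succ_of_projective n) (subsingleton_ext_succ_of_projective (n + 1))).2 ih

lemma subsingleton_ext_one_dual_iff_of_exact [Module.Projective R A] (hi : Function.Injective i)
    (hq : Function.Surjective q) (hiq : Function.Exact i q) :
    Subsingleton (Abelian.Ext (ModuleCat.of Aᵐᵒᵖ Z) (ModuleCat.of Aᵐᵒᵖ (M →ₗ[R] R)) 1) ↔
      Subsingleton (Abelian.Ext (ModuleCat.of A M) (ModuleCat.of A (Z →ₗ[R] R)) 1) := by
  let flip (X : Type) [AddCommGroup X] [Module R X] [Module A X] [IsScalarTower R A X] :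
      (ModuleCat.of Aᵐᵒᵖ Z ⟶ ModuleCat.of Aᵐᵒᵖ (X →ₗ[R] R)) ≃
        (ModuleCat.of A X ⟶ ModuleCat.of A (Z →ₗ[R] R)) :=
    (ModuleCat.homEquiv (M := ModuleCat.of Aᵐᵒᵖ Z) (N := ModuleCat.of Aᵐᵒᵖ (X →ₗ[R] R))).trans
      ((homDualFlip R X Z).toEquiv.trans
        (ModuleCat.homEquiv (M := ModuleCat.of A X) (N := ModuleCat.of A (Z →ₗ[R] R))).symm)
  have hS := ModuleCat.shortComplex_shortExact
    (ModuleCat.shortComplexOfCompEqZero i q hiq.linearMap_comp_eq_zero) hiq hi hq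
  rw [subsingleton_ext_one_iff_forall_exists_lift (shortExact_transpose R hi hq hiq)
      (subsingleton_ext_dual_of_projective 0),
    subsingleton_ext_one_iff_forall_exists_extension hS (subsingleton_ext_succ_of_projective 0)]
  exact (flip K).forall_congr fun f => (flip P).exists_congr fun g =>
    (flip K).injective.eq_iff.symm

lemma subsingleton_ext_succ_dual_iff_of_exact [Module.Projective R A] (hi : Function.Injective i)
    (hq : Function.Surjective q) (hiq : Function.Exact i q) (n : ℕ) :
    Subsingleton (Abelian.Ext (ModuleCat.of Aᵐᵒᵖ Z) (ModuleCat.of Aᵐᵒᵖ (M →ₗ[R] R)) (n + 2)) ↔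
      Subsingleton (Abelian.Ext (ModuleCat.of Aᵐᵒᵖ Z) (ModuleCat.of Aᵐᵒᵖ (K →ₗ[R] R)) (n + 1)) :=
  subsingleton_ext_succ_iff_covariant (shortExact_transpose R hi hq hiq)
    (subsingleton_ext_dual_of_projective n) (subsingleton_ext_dual_of_projective (n + 1))

lemma subsingleton_ext_dual_iff [Module.Projective R A] (n : ℕ) :
    Subsingleton (Abelian.Ext (ModuleCat.of Aᵐᵒᵖ Z) (ModuleCat.of Aᵐᵒᵖ (M →ₗ[R] R)) (n + 1)) ↔
      Subsingleton (Abelian.Ext (ModuleCat.of A M) (ModuleCat.of A (Z →ₗ[R] R)) (n + 1)) := by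
  induction n generalizing M with
  | zero =>
    exact subsingleton_ext_one_dual_iff_of_exact
      (K := LinearMap.ker (Finsupp.linearCombination A (id : M → M)))
      (Submodule.subtype_injective _) (Finsupp.linearCombination_id_surjective A M)
      (LinearMap.exact_subtype_ker_map _)
  | succ n ih =>
    let q := Finsupp.linearCombination A (id : M → M)
    have hq : Function.Surjective q := Finsupp.linearCombination_id_surjective A M
    have : Module.Projective R (LinearMap.ker q) := projective_ker_linearCombination_id
    let DZ := ModuleCat.of A (Z →ₗ[R] R)
    have shift : Subsingleton (Abelian.Ext (ModuleCat.of A M) DZ (n + 2)) ↔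
        Subsingleton (Abelian.Ext (ModuleCat.of A (LinearMap.ker q)) DZ (n + 1)) :=
      subsingleton_ext_succ_iff_contravariant (LinearMap.shortExact_shortComplexKer hq)
        (subsingleton_ext_succ_of_projective n) (subsingleton_ext_succ_of_projective (n + 1))
    exact (subsingleton_ext_succ_dual_iff_of_exact (K := LinearMap.ker q)
      (Submodule.subtype_injective _) hq (LinearMap.exact_subtype_ker_map q) n).trans
      (ih.trans shift.symm)

end Adjunction

end Duality

section HasLatticeHom

lemma exact_lcomp {R A X Y Z N : Type*} [CommRing R] [Ring A] [Algebra R A]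
    [AddCommGroup X] [Module A X] [AddCommGroup Y] [Module A Y] [AddCommGroup Z] [Module A Z]
    [AddCommGroup N] [Module R N] [Module A N] [IsScalarTower R A N]
    {f : X →ₗ[A] Y} {g : Y →ₗ[A] Z} (hg : Function.Surjective g) (hfg : Function.Exact f g) :
    Function.Exact (LinearMap.lcomp R N g) (LinearMap.lcomp R N f) := fun φ =>
  ⟨fun h => ⟨(LinearMap.range f).liftQ φ (LinearMap.range_le_ker_iff.2 h) ∘ₗ
      (hfg.linearEquivOfSurjective hg).symm.toLinearMap, by ext y; simp⟩,
    fun ⟨ψ, hψ⟩ => hψ ▸ LinearMap.ext fun x => by simp [hfg.apply_apply_eq_zero]⟩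

variable (R : Type) [CommRing R] (A : Type) [Ring A] [Algebra R A]
  (N : Type) [AddCommGroup N] [Module R N] [Module A N] [IsScalarTower R A N]

/-- `N` sees `X` as a lattice: `Ext¹(X, N) = 0` and `Hom(X, N)` is finitely generated projective
over the base ring `R`. Through the filtrations of a quasi-hereditary algebra, this property
propagates from the standard modules to the regular module, for which `Hom(A, N)` is `N`. -/
structure HasLatticeHom (X : Type) [AddCommGroup X] [Module A X] : Prop where
  subsingleton_ext : Subsingleton (Abelian.Ext (ModuleCat.of A X) (ModuleCat.of A N) 1)
  finite : Module.Finite R (X →ₗ[A] N)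
  projective : Module.Projective R (X →ₗ[A] N)

variable {R A N}

namespace HasLatticeHom

variable {X Y Z : Type} [AddCommGroup X] [Module A X] [AddCommGroup Y] [Module A Y]
  [AddCommGroup Z] [Module A Z]

lemma of_split (i : X →ₗ[A] Y) (p : Y →ₗ[A] X) (h : p ∘ₗ i = LinearMap.id)
    (hY : HasLatticeHom R A N Y) : HasLatticeHom R A N X := by
  have := hY.finite
  have := hY.projective
  have hip : LinearMap.lcomp R N i ∘ₗ LinearMap.lcomp R N p = LinearMap.id :=
    LinearMap.ext fun φ => LinearMap.ext fun x => congrArg φ (LinearMap.congr_fun h x)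
  exact
    { subsingleton_ext := subsingleton_ext_of_retract
        ⟨ModuleCat.ofHom i, ModuleCat.ofHom p, ModuleCat.hom_ext h⟩ hY.subsingleton_ext
      finite := .of_surjective (LinearMap.lcomp R N i)
        fun φ => ⟨_, LinearMap.congr_fun hip φ⟩
      projective := .of_split _ _ hip }

lemma of_linearEquiv (e : X ≃ₗ[A] Y) (hY : HasLatticeHom R A N Y) : HasLatticeHom R A N X :=
  hY.of_split e.toLinearMap e.symm.toLinearMap e.symm_comp

lemma of_subsingleton [Subsingleton X] : HasLatticeHom R A N X :=
  ⟨subsingleton_ext_succ_of_projective 0, inferInstance, inferInstance⟩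

lemma of_exact {f : X →ₗ[A] Y} {g : Y →ₗ[A] Z} (hf : Function.Injective f)
    (hg : Function.Surjective g) (hfg : Function.Exact f g)
    (hX : HasLatticeHom R A N X) (hZ : HasLatticeHom R A N Z) : HasLatticeHom R A N Y := by
  have hS := ModuleCat.shortComplex_shortExact
    (ModuleCat.shortComplexOfCompEqZero f g hfg.linearMap_comp_eq_zero) hfg hf hg
  have := hX.finite
  have := hX.projective
  have := hZ.finite
  have := hZ.projective
  have hinj : Function.Injective (LinearMap.lcomp R N g) := hg.injective_linearMapComp_right
  have hexact : Function.Exact (LinearMap.lcomp R N g) (LinearMap.lcomp R N f) :=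
    exact_lcomp hg hfg
  have hsurj : Function.Surjective (LinearMap.lcomp R N f) := fun φ =>
    have ⟨ψ, hψ⟩ := exists_extension_of_subsingleton_ext (Y := ModuleCat.of A N) hS
      hZ.subsingleton_ext (ModuleCat.ofHom φ)
    ⟨ψ.hom, congrArg ModuleCat.Hom.hom hψ⟩
  exact
    { subsingleton_ext := subsingleton_ext_X₂ hS hX.subsingleton_ext hZ.subsingleton_ext
      finite := .of_exact hexact hsurj
      projective := projective_of_exact_middle hinj hsurj hexact }

lemma prod (hX : HasLatticeHom R A N X) (hY : HasLatticeHom R A N Y) :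
    HasLatticeHom R A N (X × Y) :=
  .of_exact LinearMap.inl_injective LinearMap.snd_surjective .inl_snd hX hY

lemma pi {ι : Type} [Finite ι] {X : ι → Type} [∀ k, AddCommGroup (X k)] [∀ k, Module A (X k)]
    (hX : ∀ k, HasLatticeHom R A N (X k)) : HasLatticeHom R A N (∀ k, X k) := by
  induction ι using Finite.induction_empty_option with
  | of_equiv e ih =>
    exact .of_linearEquiv (LinearEquiv.piCongrLeft A X e).symm (ih fun k => hX (e k))
  | h_empty => exact .of_subsingleton
  | h_option ih =>
    exact .of_linearEquiv (LinearEquiv.piOptionEquivProd A) ((hX none).prod (ih fun k => hX _))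

lemma tensor [Module R X] [IsScalarTower R A X] (hX : HasLatticeHom R A N X) (U : Type)
    [AddCommGroup U] [Module R U] [Module.Finite R U] [Module.Projective R U] :
    HasLatticeHom R A N (X ⊗[R] U) := by
  obtain ⟨n, f, g, -, -, hfg⟩ := Module.Finite.exists_comp_eq_id_of_projective R U
  have hXn : HasLatticeHom R A N (X ⊗[R] (Fin n → R)) :=
    .of_linearEquiv
      (TensorProduct.AlgebraTensorModule.congr (.refl A X)
          (Finsupp.linearEquivFunOnFinite R R (Fin n)).symm ≪≫ₗ
        TensorProduct.finsuppScalarRight R A X (Fin n) ≪≫ₗ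
        Finsupp.linearEquivFunOnFinite A X (Fin n))
      (.pi fun _ => hX)
  refine hXn.of_split (TensorProduct.AlgebraTensorModule.lTensor A X g)
    (TensorProduct.AlgebraTensorModule.lTensor A X f) ?_
  rw [← TensorProduct.AlgebraTensorModule.lTensor_comp, hfg,
    TensorProduct.AlgebraTensorModule.lTensor_id]

lemma of_inFilt {Λ : Type} {Δ : Λ → Type} [∀ l, AddCommGroup (Δ l)] [∀ l, Module R (Δ l)]
    [∀ l, Module A (Δ l)] [∀ l, IsScalarTower R A (Δ l)] {S : Set Λ}
    (hΔ : ∀ l ∈ S, HasLatticeHom R A N (Δ l)) (hX : InFilt R A Λ Δ S X) :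
    HasLatticeHom R A N X := by
  obtain ⟨-, n, c, h0, hn, hmono, hfac⟩ := hX
  have key : ∀ i, HasLatticeHom R A N (c i) := by
    intro i
    induction i using Fin.induction with
    | zero => rw [h0]; exact .of_subsingleton
    | succ i ih =>
      obtain ⟨F⟩ := hfac i
      have := F.fin
      have := F.proj
      refine .of_exact (f := Submodule.inclusion (hmono i.castSucc_lt_succ.le))
        (Submodule.inclusion_injective _) (Submodule.mkQ_surjective _) ?_ ih
        (.of_linearEquiv F.iso ((hΔ F.lam F.mem).tensor F.U))
      rw [LinearMap.exact_iff, Submodule.ker_mkQ, Submodule.range_inclusion]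
  exact .of_linearEquiv (LinearEquiv.ofTop _ hn).symm (key (Fin.last n))

end HasLatticeHom

end HasLatticeHom

namespace IsCostandard

variable {R : Type} [CommRing R] {A : Type} [Ring A] [Algebra R A] {Λ : Type} [PartialOrder Λ]
  {Δ : Λ → Type} [∀ l, AddCommGroup (Δ l)] [∀ l, Module R (Δ l)]
  [∀ l, Module A (Δ l)] [∀ l, IsScalarTower R A (Δ l)]
  {Nb : Λ → Type} [∀ l, AddCommGroup (Nb l)] [∀ l, Module R (Nb l)]
  [∀ l, Module A (Nb l)] [∀ l, IsScalarTower R A (Nb l)]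

lemma hasLatticeHom_standard (hc : IsCostandard R A Λ Δ Nb) (l m : Λ) :
    HasLatticeHom R A (Nb m) (Δ l) := by
  obtain ⟨-, hiso, hzero, hext⟩ := hc
  have hx := extVanish_succ_iff.1 (hext l m 1 one_pos)
  by_cases hlm : l = m
  · subst hlm
    obtain ⟨e⟩ := hiso l
    exact ⟨hx, .equiv e.symm, .of_equiv e.symm⟩
  · have : Subsingleton (Δ l →ₗ[A] Nb m) := subsingleton_of_forall_eq 0 (hzero l m hlm)
    exact ⟨hx, inferInstance, inferInstance⟩

variable [Finite Λ]

lemma hasLatticeHom_self (h : SplitQH R A Λ Δ) (hc : IsCostandard R A Λ Δ Nb) (m : Λ) :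
    HasLatticeHom R A (Nb m) A := by
  have hP (l : Λ) : HasLatticeHom R A (Nb m) (h.P l) :=
    .of_exact (Submodule.subtype_injective _) (h.epi_surj l) (LinearMap.exact_subtype_ker_map _)
      (.of_inFilt (fun k _ => hc.hasLatticeHom_standard k m) (h.ker_filt l))
      (hc.hasLatticeHom_standard l m)
  obtain ⟨n, i, p, hip⟩ := h.add_gen (ModuleCat.of A A) inferInstance inferInstance
  exact .of_split i p hip (.pi fun _ => .pi hP)

lemma finite (h : SplitQH R A Λ Δ) (hc : IsCostandard R A Λ Δ Nb) (m : Λ) :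
    Module.Finite R (Nb m) :=
  have := (hc.hasLatticeHom_self h m).finite
  .equiv (LinearMap.ringLmapEquivSelf A R (Nb m))

lemma projective (h : SplitQH R A Λ Δ) (hc : IsCostandard R A Λ Δ Nb) (m : Λ) :
    Module.Projective R (Nb m) :=
  have := (hc.hasLatticeHom_self h m).projective
  .of_equiv (LinearMap.ringLmapEquivSelf A R (Nb m))

end IsCostandard

section Transport

variable {R : Type} [CommRing R] {A B : Type} [Ring A] [Algebra R A] [Ring B] [Algebra R B]
  {σ : A →+* B} {σ' : B →+* A} [RingHomInvPair σ σ'] [RingHomInvPair σ' σ]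

/-- Restriction of scalars along an isomorphism of rings, as a semilinear equivalence. -/
def restrictScalarsEquiv (σ : A →+* B) (σ' : B →+* A) [RingHomInvPair σ σ'] [RingHomInvPair σ' σ]
    (M : ModuleCat.{0} A) : M ≃ₛₗ[σ] (ModuleCat.restrictScalars σ').obj M where
  __ := AddEquiv.refl M
  map_smul' a m := congrArg (· • m) (RingHomInvPair.comp_apply_eq (σ := σ) (σ' := σ') (x := a)).symm

/-- A product of semilinear equivalences. -/
def semilinearPiCongrRight {ι : Type} {M M' : ι → Type} [∀ k, AddCommGroup (M k)]
    [∀ k, Module A (M k)] [∀ k, AddCommGroup (M' k)] [∀ k, Module B (M' k)]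
    (u : ∀ k, M k ≃ₛₗ[σ] M' k) : (∀ k, M k) ≃ₛₗ[σ] (∀ k, M' k) where
  __ := AddEquiv.piCongrRight fun k => (u k).toAddEquiv
  map_smul' a x := funext fun k => (u k).map_smulₛₗ a (x k)

variable {M M' N N' : Type} [AddCommGroup M] [Module A M] [AddCommGroup M'] [Module B M']
  [AddCommGroup N] [Module A N] [AddCommGroup N'] [Module B N']

/-- The kernels of two maps which correspond under semilinear equivalences correspond. -/
def kerEquiv (u : M ≃ₛₗ[σ] M') (v : N ≃ₛₗ[σ] N') (f : M →ₗ[A] N) :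
    LinearMap.ker f ≃ₛₗ[σ] LinearMap.ker (LinearEquiv.arrowCongrAddEquiv u v f) :=
  u.ofSubmodules _ _ <| by
    ext x
    simp [Submodule.mem_map_equiv]

lemma InAdd.map (t : N ≃ₛₗ[σ] N') (u : M ≃ₛₗ[σ] M') (h : InAdd A N M) : InAdd B N' M' := by
  obtain ⟨n, i, p, hip⟩ := h
  let v : (Fin n → N) ≃ₛₗ[σ] (Fin n → N') := semilinearPiCongrRight fun _ => t
  refine ⟨n, LinearEquiv.arrowCongrAddEquiv u v i, LinearEquiv.arrowCongrAddEquiv v u p, ?_⟩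
  ext x
  have hx : p (i (u.symm x)) = u.symm x := LinearMap.congr_fun hip _
  simp [hx]

section Scalar

variable [Module R M] [IsScalarTower R A M] [Module R M'] [IsScalarTower R B M']

/-- A semilinear equivalence over an isomorphism of `R`-algebras is `R`-linear. -/
def baseLinearEquiv (hσ : ∀ r, σ (algebraMap R A r) = algebraMap R B r) (u : M ≃ₛₗ[σ] M') :
    M ≃ₗ[R] M' where
  __ := u.toAddEquiv
  map_smul' r m := by
    change u (r • m) = r • u m
    rw [← algebraMap_smul A r m, map_smulₛₗ, hσ, algebraMap_smul]

/-- The tensor product of a semilinear equivalence with an `R`-module. -/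
def semilinearRTensor (hσ : ∀ r, σ (algebraMap R A r) = algebraMap R B r) (u : M ≃ₛₗ[σ] M')
    (U : Type) [AddCommGroup U] [Module R U] : (M ⊗[R] U) ≃ₛₗ[σ] (M' ⊗[R] U) where
  __ := (TensorProduct.congr (baseLinearEquiv hσ u) (LinearEquiv.refl R U)).toAddEquiv
  map_smul' a t := by
    change TensorProduct.congr (baseLinearEquiv hσ u) (LinearEquiv.refl R U) (a • t) =
      σ a • TensorProduct.congr (baseLinearEquiv hσ u) (LinearEquiv.refl R U) t
    induction t with
    | zero => simp
    | add x y hx hy => simp only [smul_add, map_add, hx, hy]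
    | tmul x y => exact congrArg (· ⊗ₜ[R] y) (u.map_smulₛₗ a x)

/-- Conjugation by a semilinear equivalence, as an isomorphism of endomorphism algebras. -/
def semilinearConjAlgEquiv (hσ : ∀ r, σ (algebraMap R A r) = algebraMap R B r)
    (u : M ≃ₛₗ[σ] M') : Module.End A M ≃ₐ[R] Module.End B M' :=
  AlgEquiv.ofRingEquiv (f := u.conjRingEquiv) fun r => LinearMap.ext fun x => by
    change u (r • u.symm x) = r • x
    have hr : u (r • u.symm x) = r • u (u.symm x) := (baseLinearEquiv hσ u).map_smul r (u.symm x)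
    rw [hr, u.apply_symm_apply]

end Scalar

variable {Λ : Type}
  {Δ : Λ → Type} [∀ l, AddCommGroup (Δ l)] [∀ l, Module R (Δ l)]
  [∀ l, Module A (Δ l)] [∀ l, IsScalarTower R A (Δ l)]
  {Δ' : Λ → Type} [∀ l, AddCommGroup (Δ' l)] [∀ l, Module R (Δ' l)]
  [∀ l, Module B (Δ' l)] [∀ l, IsScalarTower R B (Δ' l)]

/-- Transport of a factor `Δ(λ) ⊗ U` along semilinear equivalences. -/
def TensorFactor.map (hσ : ∀ r, σ (algebraMap R A r) = algebraMap R B r)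
    (φ : ∀ l, Δ l ≃ₛₗ[σ] Δ' l) {S : Set Λ} (u : M ≃ₛₗ[σ] M') (F : TensorFactor R A Λ Δ S M) :
    TensorFactor R B Λ Δ' S M' where
  __ := F
  iso := (u.symm.trans F.iso).trans (semilinearRTensor hσ (φ F.lam) F.U)

lemma InFilt.map (hσ : ∀ r, σ (algebraMap R A r) = algebraMap R B r)
    (φ : ∀ l, Δ l ≃ₛₗ[σ] Δ' l) {S : Set Λ} (u : M ≃ₛₗ[σ] M') (h : InFilt R A Λ Δ S M) :
    InFilt R B Λ Δ' S M' := by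
  obtain ⟨hfin, n, c, h0, hn, hmono, hfac⟩ := h
  refine ⟨.of_surjective u.toLinearMap u.surjective, n, fun i => (c i).map u.toLinearMap,
    by simp [h0], by simp [hn], fun i j hij => Submodule.map_mono (hmono hij), fun i => ?_⟩
  obtain ⟨F⟩ := hfac i
  refine ⟨F.map hσ φ (Submodule.Quotient.equiv _ _ (u.submoduleMap (c i.succ)) ?_)⟩
  ext ⟨y, hy⟩
  constructor
  · rintro ⟨x, hx, hxy⟩
    exact ⟨x, hx, congrArg Subtype.val hxy⟩
  · rintro ⟨x, hx, rfl⟩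
    exact ⟨⟨x, hmono i.castSucc_lt_succ.le hx⟩, hx, rfl⟩

/-- Transport of a split quasi-hereditary structure along an isomorphism of `R`-algebras. -/
def SplitQH.map [PartialOrder Λ] (hσ : ∀ r, σ (algebraMap R A r) = algebraMap R B r)
    (φ : ∀ l, Δ l ≃ₛₗ[σ] Δ' l) (h : SplitQH R A Λ Δ) : SplitQH R B Λ Δ' :=
  have eA : A ≃ₗ[R] B :=
    baseLinearEquiv hσ { RingHomInvPair.toRingEquiv σ σ' with map_smul' := map_mul σ }
  let eP := fun l => restrictScalarsEquiv σ σ' (h.P l)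
  { algFin := have := h.algFin; .equiv eA
    algProj := have := h.algProj; .of_equiv eA
    deltaFinA := fun l => have := h.deltaFinA l; .of_surjective (φ l).toLinearMap (φ l).surjective
    deltaFinR := fun l => have := h.deltaFinR l; .equiv (baseLinearEquiv hσ (φ l))
    deltaProjR := fun l => have := h.deltaProjR l; .of_equiv (baseLinearEquiv hσ (φ l))
    hom_le := fun l m ⟨f, hf⟩ => h.hom_le l m
      ⟨(LinearEquiv.arrowCongrAddEquiv (φ l) (φ m)).symm f, (AddEquiv.map_ne_zero_iff _).2 hf⟩
    endIso := fun l => (h.endIso l).map (semilinearConjAlgEquiv hσ (φ l)).symm.trans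
    P := fun l => (ModuleCat.restrictScalars σ').obj (h.P l)
    P_proj := fun l => have := h.P_proj l; .of_equiv (eP l)
    P_fin := fun l => have := h.P_fin l; .of_surjective (eP l).toLinearMap (eP l).surjective
    epi := fun l => LinearEquiv.arrowCongrAddEquiv (eP l) (φ l) (h.epi l)
    epi_surj := fun l => (φ l).surjective.comp ((h.epi_surj l).comp (eP l).symm.surjective)
    ker_filt := fun l => (h.ker_filt l).map hσ φ (kerEquiv (eP l) (φ l) (h.epi l))
    add_gen := fun Q _ _ =>
      let q := restrictScalarsEquiv σ' σ Q
      (h.add_gen _ (.of_surjective q.toLinearMap q.surjective) (.of_equiv q)).map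
        (semilinearPiCongrRight eP) q.symm }

end Transport

section DoubleDual

/-- The pointwise scalar action on a dual. Stated for duals only, it is preferred on a double dual
to the instance `dualModule'`, which finds a second action of `R` there, through `Rᵐᵒᵖ`. -/
local instance dualScalarModule (R M : Type) [CommRing R] [AddCommGroup M] [Module R M] :
    Module R (M →ₗ[R] R) := LinearMap.module

variable (R : Type) [CommRing R] (A : Type) [Ring A] [Algebra R A]
  (M : Type) [AddCommGroup M] [Module R M] [Module A M] [IsScalarTower R A M]

/-- An `A`-module which is reflexive over `R` is isomorphic to its double dual `D(DM)`, taken as a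
left `A`-module. -/
def doubleDualEquiv [Module.IsReflexive R M] : M ≃ₗ[A] ((M →ₗ[R] R) →ₗ[R] R) where
  __ := Module.evalEquiv R M
  map_smul' _ _ := rfl

variable {A M} in
/-- Postcomposition with an `A`-linear equivalence, as an equivalence over the base ring `R`. -/
def homCongrRight (X : Type) [AddCommGroup X] [Module A X] {N : Type} [AddCommGroup N] [Module R N]
    [Module A N] [IsScalarTower R A N] (e : M ≃ₗ[A] N) : (X →ₗ[A] M) ≃ₗ[R] (X →ₗ[A] N) where
  __ := LinearEquiv.arrowCongrAddEquiv (.refl A X) e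
  map_smul' r f := LinearMap.ext fun x => (e.restrictScalars R).map_smul r (f x)

/-- For `M` reflexive over `R`, taking duals identifies the maps `X → M` with the maps
`DM → DX`. -/
def homDualDualEquiv (X : Type) [AddCommGroup X] [Module R X] [Module A X] [IsScalarTower R A X]
    [Module.IsReflexive R M] : ((M →ₗ[R] R) →ₗ[Aᵐᵒᵖ] (X →ₗ[R] R)) ≃ₗ[R] (X →ₗ[A] M) :=
  homDualFlip R X (M →ₗ[R] R) ≪≫ₗ (homCongrRight R X (doubleDualEquiv R A M)).symm

lemma extVanish_dual_dual_iff [Module.Projective R A] (X : Type) [AddCommGroup X] [Module R X]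
    [Module A X] [IsScalarTower R A X] [Module.Projective R X] [Module.Finite R M]
    [Module.Projective R M] {n : ℕ} :
    extVanish Aᵐᵒᵖ (M →ₗ[R] R) (X →ₗ[R] R) (n + 1) ↔ extVanish A X M (n + 1) := by
  have : Module.Projective R (M →ₗ[R] R) := inferInstanceAs (Module.Projective R (Module.Dual R M))
  rw [extVanish_succ_iff, subsingleton_ext_dual_iff, ← extVanish_succ_iff,
    extVanish_congr_right (doubleDualEquiv R A M).symm]

local instance : RingHomInvPair (RingEquiv.opOp A : A →+* Aᵐᵒᵖᵐᵒᵖ) (RingEquiv.opOp A).symm :=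
  .of_ringEquiv _

local instance : RingHomInvPair ((RingEquiv.opOp A).symm : Aᵐᵒᵖᵐᵒᵖ →+* A) (RingEquiv.opOp A) :=
  .of_ringEquiv_symm _

/-- The isomorphism of a reflexive module with its double dual, the latter taken as a module over
`(Aᵒᵖ)ᵒᵖ`. -/
def doubleDualSemilinearEquiv [Module.IsReflexive R M] :
    M ≃ₛₗ[(RingEquiv.opOp A : A →+* Aᵐᵒᵖᵐᵒᵖ)] ((M →ₗ[R] R) →ₗ[R] R) where
  __ := Module.evalEquiv R M
  map_smul' _ _ := rfl

variable {R A} in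
/-- The double duals of the standard modules are standard modules over `(Aᵒᵖ)ᵒᵖ`. -/
def SplitQH.doubleDual {Λ : Type} [PartialOrder Λ] {Δ : Λ → Type} [∀ l, AddCommGroup (Δ l)]
    [∀ l, Module R (Δ l)] [∀ l, Module A (Δ l)] [∀ l, IsScalarTower R A (Δ l)]
    (h : SplitQH R A Λ Δ) : SplitQH R Aᵐᵒᵖᵐᵒᵖ Λ (fun l => ((Δ l →ₗ[R] R) →ₗ[R] R)) :=
  have := h.deltaFinR
  have := h.deltaProjR
  h.map (σ := (RingEquiv.opOp A : A →+* Aᵐᵒᵖᵐᵒᵖ)) (fun _ => rfl) fun l =>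
    doubleDualSemilinearEquiv R A (Δ l)

end DoubleDual

theorem dual_standard_is_costandard_general
    {R : Type} [CommRing R] {A : Type} [Ring A] [Algebra R A] {Λ : Type} [Finite Λ] [PartialOrder Λ]
    {Δ : Λ → Type} [∀ l, AddCommGroup (Δ l)] [∀ l, Module R (Δ l)]
    [∀ l, Module A (Δ l)] [∀ l, IsScalarTower R A (Δ l)]
    {Nb : Λ → Type} [∀ l, AddCommGroup (Nb l)] [∀ l, Module R (Nb l)]
    [∀ l, Module A (Nb l)] [∀ l, IsScalarTower R A (Nb l)]
    (h : SplitQH R A Λ Δ) (hc : IsCostandard R A Λ Δ Nb) :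
    IsCostandard R Aᵐᵒᵖ Λ (fun l => (Nb l →ₗ[R] R)) (fun l => (Δ l →ₗ[R] R)) := by
  have := h.algProj
  have := h.deltaProjR
  have := hc.finite h
  have := hc.projective h
  obtain ⟨-, hiso, hzero, hext⟩ := hc
  refine ⟨⟨h.doubleDual⟩, fun l => ?_, fun l m hlm f => ?_, fun l m i hi => ?_⟩
  · exact (hiso l).map (homDualDualEquiv R A (Nb l) (Δ l)).trans
  · exact (LinearEquiv.map_eq_zero_iff _).1
      (hzero m l hlm.symm (homDualDualEquiv R A (Nb l) (Δ m) f))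
  · obtain ⟨n, rfl⟩ := Nat.exists_eq_succ_of_ne_zero hi.ne'
    exact (extVanish_dual_dual_iff R A (Nb l) (Δ m)).2 (hext m l _ hi)

/-- If `(A, {Δ(λ)})` is split quasi-hereditary with costandard modules
`{Nb(λ)}`, then the duals `{DΔ(λ)}` are costandard modules for the split quasi-hereditary
algebra `(A^op, {DNb(λ)})`. -/
theorem dual_standard_is_costandard
    (R : Type) [CommRing R] [IsNoetherianRing R]
    (A : Type) [Ring A] [Algebra R A]
    (Λ : Type) [Fintype Λ] [PartialOrder Λ]
    (Δ : Λ → Type) [∀ l, AddCommGroup (Δ l)] [∀ l, Module R (Δ l)]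
    [∀ l, Module A (Δ l)] [∀ l, IsScalarTower R A (Δ l)]
    (Nb : Λ → Type) [∀ l, AddCommGroup (Nb l)] [∀ l, Module R (Nb l)]
    [∀ l, Module A (Nb l)] [∀ l, IsScalarTower R A (Nb l)]
    (h : SplitQH R A Λ Δ) (hc : IsCostandard R A Λ Δ Nb) :
    IsCostandard R Aᵐᵒᵖ Λ (fun l => (Nb l →ₗ[R] R)) (fun l => (Δ l →ₗ[R] R)) := by
  exact dual_standard_is_costandard_general h hc

end
end
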